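/- arXiv:1706.07645 — 10 statements merged into one kernel-verified Lean document; each statement's English description precedes it below -/
import Mathlib

section
/- Let k be a field equipped with an 𝔽_q[t]-algebra structure, let a ∈ 𝔽_q[t] be monic and nonconstant, and let b ∈ 𝔽_q[t]. Then the Carlitz polynomial Φ^C_a(Z) divides Φ^C_b(Z) in k[Z] if and only if a divides b in 𝔽_q[t]. -/
open Polynomial

/-- `Φ` is the Carlitz module map `a ↦ Φ^C_a` over `𝔽_q[t]`: it is `𝔽_q`-linear,
turns multiplication into composition, sends `1` to `Z` and `t` to `t·Z + Z^q`. -/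
def IsCarlitzHom {Fq : Type*} [Field Fq] (q : ℕ)
    (Φ : Fq[X] → Polynomial (Fq[X])) : Prop :=
  (∀ a b : Fq[X], Φ (a + b) = Φ a + Φ b) ∧
  (∀ (c : Fq) (a : Fq[X]), Φ (Polynomial.C c * a) = Polynomial.C (Polynomial.C c) * Φ a) ∧
  (∀ a b : Fq[X], Φ (a * b) = (Φ a).comp (Φ b)) ∧
  Φ 1 = Polynomial.X ∧
  Φ Polynomial.X = Polynomial.C Polynomial.X * Polynomial.X + Polynomial.X ^ q

theorem carlitz_natDegree {Fq : Type*} [Field Fq]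
    (q : ℕ) (hq : 2 ≤ q)
    (Φ : Fq[X] → Polynomial (Fq[X])) (hΦ : IsCarlitzHom q Φ)
    {k : Type*} [Field k] [Algebra Fq[X] k] (n : ℕ) :
    ∀ r : Fq[X], r ≠ 0 → r.natDegree = n →
      ((Φ r).map (algebraMap Fq[X] k)).natDegree = q ^ n := by
  obtain ⟨hadd, hsm, hmul, h1, hX⟩ := hΦ
  have hconst : ∀ c : Fq, (Φ (C c)).map (algebraMap Fq[X] k)
      = C (algebraMap Fq[X] k (C c)) * X := by
    intro c
    have := hsm c 1
    rw [mul_one, h1] at this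
    rw [this]; simp
  have hPX : ((Φ X).map (algebraMap Fq[X] k)).natDegree = q := by
    rw [hX]
    simp only [Polynomial.map_add, Polynomial.map_mul, Polynomial.map_pow, map_C, map_X]
    rw [natDegree_add_eq_right_of_natDegree_lt] <;> rw [natDegree_X_pow]
    exact lt_of_le_of_lt (natDegree_C_mul_le _ _) (by rw [natDegree_X]; omega)
  induction n with
  | zero =>
    intro r hr hd
    rw [eq_C_of_natDegree_eq_zero hd] at hr ⊢
    have hc : r.coeff 0 ≠ 0 := fun h => hr (by rw [h, C_0])
    have hu : IsUnit (algebraMap Fq[X] k (C (r.coeff 0))) :=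
      ((isUnit_iff_ne_zero.mpr hc).map C).map (algebraMap Fq[X] k)
    rw [hconst, natDegree_C_mul_X _ hu.ne_zero, pow_zero]
  | succ n ih =>
    intro r hr hd
    have hs : r.divX.natDegree = n := by rw [natDegree_divX_eq_natDegree_tsub_one]; omega
    have hs0 : r.divX ≠ 0 := by
      intro h
      rw [divX_eq_zero_iff] at h
      rw [h, natDegree_C] at hd
      omega
    have e : ((Φ (X * r.divX)).map (algebraMap Fq[X] k)).natDegree = q ^ (n + 1) := by
      rw [hmul, Polynomial.map_comp, natDegree_comp, hPX, ih _ hs0 hs, pow_succ, mul_comm]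
    have hr' := X_mul_divX_add r
    rw [← hr', hadd, Polynomial.map_add, natDegree_add_eq_left_of_natDegree_lt, e]
    rw [e, hconst]
    refine lt_of_le_of_lt (natDegree_C_mul_le _ _) ?_
    rw [natDegree_X]
    exact Nat.one_lt_pow (by omega) (by omega)

theorem carlitz_dvd_iff {Fq : Type*} [Field Fq] [Fintype Fq]
    (q : ℕ) (hq : q = Fintype.card Fq)
    (Φ : Fq[X] → Polynomial (Fq[X])) (hΦ : IsCarlitzHom q Φ)
    {k : Type*} [Field k] [Algebra Fq[X] k]
    (a b : Fq[X]) (ha : a.Monic) (hdeg : 1 ≤ a.natDegree) :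
    (Φ a).map (algebraMap Fq[X] k) ∣ (Φ b).map (algebraMap Fq[X] k) ↔ a ∣ b := by
  have hq2 : 2 ≤ q := by rw [hq]; exact Fintype.one_lt_card
  have hD := carlitz_natDegree q hq2 Φ hΦ (k := k)
  obtain ⟨hadd, hsm, hmul, h1, hX⟩ := hΦ
  have h0 : Φ 0 = 0 := by
    have := hadd 0 0
    simpa using this
  have hXd : ∀ c, X ∣ Φ c := by
    intro c
    have := hmul c 0
    rw [mul_zero, h0, comp_zero] at this
    rw [X_dvd_iff, coeff_zero_eq_eval_zero]
    exact (C_eq_zero.mp this.symm)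
  have hback : ∀ c, (Φ a) ∣ Φ (a * c) := by
    intro c
    obtain ⟨g, hg⟩ := hXd c
    rw [mul_comm, hmul, hg, mul_comp, X_comp]
    exact dvd_mul_right _ _
  constructor
  · intro h
    rw [← modByMonic_eq_zero_iff_dvd ha]
    by_contra hr
    have e : Φ b = Φ (b %ₘ a) + Φ (a * (b /ₘ a)) := by
      rw [← hadd, modByMonic_add_div]
    rw [e, Polynomial.map_add] at h
    have h2 := (dvd_add_left (Polynomial.map_dvd (algebraMap Fq[X] k) (hback (b /ₘ a)))).mp h
    have hn := hD _ _ hr rfl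
    have hlt : (b %ₘ a).natDegree < a.natDegree :=
      natDegree_modByMonic_lt b ha (fun h => by rw [h] at hdeg; simp at hdeg)
    have hne : (Φ (b %ₘ a)).map (algebraMap Fq[X] k) ≠ 0 := by
      intro h
      rw [h, natDegree_zero] at hn
      exact absurd hn.symm (pow_ne_zero _ (by omega))
    have hle := natDegree_le_of_dvd h2 hne
    rw [hn, hD _ _ ha.ne_zero rfl] at hle
    exact absurd (Nat.pow_lt_pow_right (by omega : 1 < q) hlt) (by omega)
  · rintro ⟨c, rfl⟩
    exact Polynomial.map_dvd _ (hback c)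
end

section
/- Let ℘ ∈ 𝔽_q[t] be a monic irreducible polynomial of degree d and let n ≥ 1. Then the exponent of the unit group (𝔽_q[t]/(℘^n))^× equals (q^d − 1)·p^{l_p(n)}, where l_p(n) = min{N ∈ ℤ_{≥0} : p^N ≥ n}. -/
open Polynomial

lemma aux_unit {Fq : Type*} [Field Fq] (P f : Fq[X]) (h : IsCoprime f P) :
    ∃ u : (Fq[X] ⧸ Ideal.span {P})ˣ, ∀ e : ℕ, u ^ e = 1 ↔ P ∣ f ^ e - 1 := by
  obtain ⟨a, b, hab⟩ := h
  have hu : IsUnit (Ideal.Quotient.mk (Ideal.span {P}) f) := by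
    refine IsUnit.of_mul_eq_one (Ideal.Quotient.mk (Ideal.span {P}) a) ?_
    rw [← map_mul, ← map_one (Ideal.Quotient.mk (Ideal.span {P})), Ideal.Quotient.eq,
      Ideal.mem_span_singleton]
    exact ⟨-b, by linear_combination hab⟩
  obtain ⟨u, hu⟩ := hu
  refine ⟨u, fun e => ?_⟩
  rw [Units.ext_iff, Units.val_pow_eq_pow_val, hu, Units.val_one, ← map_pow,
    ← map_one (Ideal.Quotient.mk (Ideal.span {P})), Ideal.Quotient.eq, Ideal.mem_span_singleton]

/-- for `℘ ∈ 𝔽_q[t]` monic irreducible of degree `d` and `n ≥ 1`, the exponent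
of the unit group `(𝔽_q[t]/(℘^n))^×` equals `(q^d − 1)·p^{l_p(n)}`, where
`l_p(n) = min {N : p^N ≥ n}`. -/
theorem exponent_units_quotient_carlitz {Fq : Type*} [Field Fq] [Fintype Fq]
    (p q : ℕ) (hp : p.Prime) [CharP Fq p] (hq : q = Fintype.card Fq)
    (℘ : Fq[X]) (hmon : ℘.Monic) (hirr : Irreducible ℘)
    (d n : ℕ) (hdeg : ℘.natDegree = d) (hn : 1 ≤ n) :
    Monoid.exponent ((Fq[X] ⧸ Ideal.span {℘ ^ n})ˣ)
      = (q ^ d - 1) * p ^ sInf {N : ℕ | n ≤ p ^ N} := by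
  have : Fact p.Prime := ⟨hp⟩
  have : Fact (Irreducible ℘) := ⟨hirr⟩
  have hne : {N : ℕ | n ≤ p ^ N}.Nonempty := ⟨n, (Nat.lt_pow_self hp.one_lt).le⟩
  have hN : n ≤ p ^ sInf {N : ℕ | n ≤ p ^ N} := Nat.sInf_mem hne
  have hmin : ∀ m, m < sInf {N : ℕ | n ≤ p ^ N} → p ^ m < n := fun m hm =>
    not_le.1 (fun h => Nat.notMem_of_lt_sInf hm (show m ∈ {N : ℕ | n ≤ p ^ N} from h))
  generalize sInf {N : ℕ | n ≤ p ^ N} = N at hN hmin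
  have hd : 0 < d := hdeg ▸ hirr.natDegree_pos
  have hfin : Module.Finite Fq (AdjoinRoot ℘) := (AdjoinRoot.powerBasis hirr.ne_zero).finite
  have : Finite (AdjoinRoot ℘) := Module.finite_of_finite Fq
  have : Fintype (AdjoinRoot ℘) := Fintype.ofFinite _
  have hcard : Nat.card (AdjoinRoot ℘) = q ^ d := by
    rw [Module.natCard_eq_pow_finrank (K := Fq), (AdjoinRoot.powerBasis hirr.ne_zero).finrank,
      AdjoinRoot.powerBasis_dim, hdeg, hq, Nat.card_eq_fintype_card]
  have hcu : Nat.card (AdjoinRoot ℘)ˣ = q ^ d - 1 := by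
    rw [Nat.card_units, hcard]
  have hpq : p ∣ q := by
    rw [hq]; exact (CharP.cast_eq_zero_iff Fq p _).1 (by simp)
  have hq0 : 0 < q := hq ▸ Fintype.card_pos
  have hcop : Nat.Coprime (q ^ d - 1) (p ^ N) := by
    apply Nat.Coprime.pow_right
    refine (Nat.coprime_comm.1 ((Nat.Prime.coprime_iff_not_dvd hp).2 fun h => ?_))
    have h1 : p ∣ q ^ d := dvd_pow hpq hd.ne'
    have h2 := (Nat.dvd_sub_iff_right (Nat.one_le_pow d q hq0) h1).1 h
    exact hp.one_lt.ne' (Nat.dvd_one.1 h2)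
  apply Nat.dvd_antisymm
  · apply Monoid.exponent_dvd_of_forall_pow_eq_one
    intro u
    obtain ⟨f, hf⟩ := Ideal.Quotient.mk_surjective u.val
    obtain ⟨g, hg⟩ := Ideal.Quotient.mk_surjective u.inv
    have h1 : ℘ ^ n ∣ f * g - 1 := by
      rw [← Ideal.mem_span_singleton, ← Ideal.Quotient.eq, map_mul, hf, hg, map_one, u.val_inv]
    have h2 : AdjoinRoot.mk ℘ f ≠ 0 := by
      intro h
      rw [AdjoinRoot.mk_eq_zero] at h
      have h3 := (dvd_pow_self ℘ (by omega : n ≠ 0)).trans h1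
      have h4 : ℘ ∣ 1 := by
        have := dvd_sub (h.mul_right g) h3
        simpa using this
      exact hirr.not_isUnit (isUnit_of_dvd_one h4)
    have h5 : ℘ ∣ f ^ (q ^ d - 1) - 1 := by
      rw [← AdjoinRoot.mk_eq_zero, map_sub, map_pow, map_one, ← hcard, Nat.card_eq_fintype_card,
        FiniteField.pow_card_sub_one_eq_one _ h2, sub_self]
    have h6 : ℘ ^ n ∣ f ^ ((q ^ d - 1) * p ^ N) - 1 := by
      have := pow_dvd_pow_of_dvd h5 (p ^ N)
      rw [sub_pow_char_pow, one_pow, ← pow_mul] at this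
      exact (pow_dvd_pow _ hN).trans this
    rw [Units.ext_iff, Units.val_pow_eq_pow_val, ← hf, ← map_pow, Units.val_one,
      ← map_one (Ideal.Quotient.mk _), Ideal.Quotient.eq, Ideal.mem_span_singleton]
    exact h6
  · apply hcop.mul_dvd_of_dvd_of_dvd
    · obtain ⟨g, hg⟩ := IsCyclic.exists_generator (α := (AdjoinRoot ℘)ˣ)
      obtain ⟨f, hf⟩ := AdjoinRoot.mk_surjective g.val
      have hnd : ¬ ℘ ∣ f := by
        rw [← AdjoinRoot.mk_eq_zero, hf]; exact g.ne_zero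
      have hc : IsCoprime f (℘ ^ n) :=
        (((hirr.coprime_iff_not_dvd).2 hnd).symm).pow_right
      obtain ⟨u, hu⟩ := aux_unit _ _ hc
      have h1 := (hu _).1 (Monoid.pow_exponent_eq_one u)
      have h2 := (dvd_pow_self ℘ (by omega : n ≠ 0)).trans h1
      rw [← AdjoinRoot.mk_eq_zero, map_sub, map_pow, hf, map_one, sub_eq_zero] at h2
      rw [← hcu, ← orderOf_eq_card_of_forall_mem_zpowers hg]
      apply orderOf_dvd_of_pow_eq_one
      ext
      simpa using h2
    · have hc : IsCoprime (1 + ℘) (℘ ^ n) := by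
        apply IsCoprime.pow_right
        exact ⟨1, -1, by ring⟩
      obtain ⟨u, hu⟩ := aux_unit _ _ hc
      have key : ∀ m, u ^ p ^ m = 1 ↔ n ≤ p ^ m := by
        intro m
        rw [hu, add_pow_char_pow, one_pow, add_sub_cancel_left]
        exact pow_dvd_pow_iff hirr.ne_zero hirr.not_isUnit
      have ho : orderOf u = p ^ N := by
        rcases N with _ | m
        · have := (key 0).2 hN
          simpa using this
        · exact orderOf_eq_prime_pow (fun h => absurd ((key m).1 h) (not_le.2 (hmin m (by omega))))
            ((key _).2 hN)
      rw [← ho]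
      exact Monoid.order_dvd_exponent u
end

section
/- Let ℘ ∈ 𝔽_q[t] be monic irreducible of degree d, n ≥ 1, and A_n = 𝔽_q[t]/(℘^n). Let B be a nonzero flat A_n-algebra such that the quotient B/℘B is an integral domain, and let φ : B → B be an A_n-algebra homomorphism satisfying φ(b) ≡ b^{q^d} (mod ℘B) for every b ∈ B. Then the structure map A_n → B is injective and the fixed subring {b ∈ B : φ(b) = b} is exactly the image of A_n in B; equivalently, the sequence 0 → A_n → B →^{φ−1} B is exact. -/
open Polynomial

/-- A root of `X^|K| - X` in a domain over a finite field `K` comes from `K`. -/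
theorem aux_root_mem {K C : Type*} [Field K] [Fintype K] [CommRing C] [IsDomain C]
    (g : K →+* C) (c : C) (hc : c ^ Fintype.card K = c) : ∃ a, g a = c := by
  have hcard : Multiset.card (X ^ Fintype.card K - X : K[X]).roots
      = (X ^ Fintype.card K - X : K[X]).natDegree := by
    rw [FiniteField.roots_X_pow_card_sub_X,
      FiniteField.X_pow_card_sub_X_natDegree_eq K Fintype.one_lt_card]
    rfl
  have hm : (X ^ Fintype.card K - X : K[X]).Monic := by
    apply monic_X_pow_sub
    rw [degree_X]
    exact_mod_cast Fintype.one_lt_card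
  have h := prod_multiset_X_sub_C_of_monic_of_roots_card_eq hm hcard
  rw [FiniteField.roots_X_pow_card_sub_X] at h
  have h2 : (∏ a : K, (X - Polynomial.C a)) = (X ^ Fintype.card K - X : K[X]) := h
  have h3 := congrArg (fun p => p.eval₂ g c) h2
  simp only [eval₂_finsetProd, eval₂_sub, eval₂_X, eval₂_C, eval₂_pow, hc, sub_self] at h3
  obtain ⟨a, -, ha⟩ := Finset.prod_eq_zero_iff.mp h3
  exact ⟨a, (sub_eq_zero.mp ha).symm⟩

theorem aux_flat {A B : Type*} [CommRing A] [CommRing B] [Algebra A B] [Module.Flat A B]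
    (a : A) (b : B) (h : algebraMap A B a * b = 0) (x : A)
    (hx : ∀ y, a * y = 0 → x ∣ y) : b ∈ Ideal.span {algebraMap A B x} := by
  have h0 : ∑ i : Unit, (fun _ => a) i • (fun _ => b) i = 0 := by
    simpa [Algebra.smul_def] using h
  obtain ⟨k, m, y, h1, h2⟩ := Module.Flat.isTrivialRelation_of_sum_smul_eq_zero (R := A) (M := B)
    (f := fun _ : Unit => a) (x := fun _ => b) h0
  have h1 := h1 ()
  simp only at h1
  rw [h1]
  refine Ideal.sum_mem _ fun j _ => ?_
  obtain ⟨z, hz⟩ := hx (m () j) (by simpa using h2 j)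
  rw [hz, Algebra.smul_def, map_mul, mul_assoc]
  exact Ideal.mul_mem_right _ _ (Ideal.mem_span_singleton_self _)

/-- let `A_n = 𝔽_q[t]/(℘^n)` with `℘` monic irreducible of degree `d`, let
`B` be a nonzero flat `A_n`-algebra with `B/℘B` a domain, and let `φ : B → B` be an
`A_n`-algebra endomorphism lifting the `q^d`-power Frobenius modulo `℘`. Then
`A_n → B` is injective and the `φ`-fixed subring of `B` is exactly the image of `A_n`;
i.e. the sequence `0 → A_n → B → B` (last map `φ − id`) is exact. -/
theorem fixed_points_of_frobenius_lift {Fq : Type*} [Field Fq] [Fintype Fq]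
    (q : ℕ) (hq : q = Fintype.card Fq)
    (℘ : Fq[X]) (hmon : ℘.Monic) (hirr : Irreducible ℘)
    (d n : ℕ) (hdeg : ℘.natDegree = d) (hn : 1 ≤ n)
    {B : Type*} [CommRing B] [Nontrivial B]
    [Algebra (Fq[X] ⧸ Ideal.span {℘ ^ n}) B]
    [Module.Flat (Fq[X] ⧸ Ideal.span {℘ ^ n}) B]
    (hdom : IsDomain (B ⧸ Ideal.span {algebraMap (Fq[X] ⧸ Ideal.span {℘ ^ n}) B
        (Ideal.Quotient.mk (Ideal.span {℘ ^ n}) ℘)}))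
    (φ : B →ₐ[Fq[X] ⧸ Ideal.span {℘ ^ n}] B)
    (hφ : ∀ b : B, φ b - b ^ q ^ d ∈ Ideal.span {algebraMap (Fq[X] ⧸ Ideal.span {℘ ^ n}) B
        (Ideal.Quotient.mk (Ideal.span {℘ ^ n}) ℘)}) :
    Function.Injective (algebraMap (Fq[X] ⧸ Ideal.span {℘ ^ n}) B) ∧
    ∀ b : B, φ b = b ↔ b ∈ Set.range (algebraMap (Fq[X] ⧸ Ideal.span {℘ ^ n}) B) := by
  have hp : Prime ℘ := hirr.prime
  set A := Fq[X] ⧸ Ideal.span {℘ ^ n} with hA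
  set π : A := Ideal.Quotient.mk (Ideal.span {℘ ^ n}) ℘ with hπ
  set P : B := algebraMap A B π with hP
  have hz : ∀ f : Fq[X], (Ideal.Quotient.mk (Ideal.span {℘ ^ n}) f : A) = 0 ↔ ℘ ^ n ∣ f := by
    intro f
    rw [Ideal.Quotient.eq_zero_iff_mem, Ideal.mem_span_singleton]
  -- zero divisors in A are divisible by π
  have key : ∀ a : A, a ≠ 0 → ∀ y, a * y = 0 → π ∣ y := by
    intro a ha y hy
    obtain ⟨f, rfl⟩ := Ideal.Quotient.mk_surjective a
    obtain ⟨g, rfl⟩ := Ideal.Quotient.mk_surjective y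
    rw [← map_mul, hz] at hy
    by_contra hg
    have hg' : ¬ ℘ ∣ g := fun h => hg (map_dvd _ h)
    exact ha ((hz f).2 (hp.pow_dvd_of_dvd_mul_right n hg' hy))
  have hinj : Function.Injective (algebraMap A B) := by
    rw [injective_iff_map_eq_zero]
    intro a ha
    by_contra h
    have h1 := aux_flat a (1 : B) (by simpa using ha) π (key a h)
    have := (Ideal.eq_top_iff_one _).2 h1
    exact (Ideal.Quotient.nontrivial_iff.mp hdom.toNontrivial) this
  have hπn : π ^ n = 0 := by
    rw [hπ, ← map_pow, hz]
  have hπk : ∀ k < n, π ^ k ≠ 0 := by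
    intro k hk h
    rw [hπ, ← map_pow, hz, pow_dvd_pow_iff hp.ne_zero hp.not_unit] at h
    omega
  -- residue field
  have : (Ideal.span {℘}).IsMaximal := PrincipalIdealRing.isMaximal_of_irreducible hirr
  letI : Field (Fq[X] ⧸ Ideal.span {℘}) := Ideal.Quotient.field _
  haveI : Module.Finite Fq (Fq[X] ⧸ Ideal.span {℘}) := hmon.finite_quotient
  haveI : Finite (Fq[X] ⧸ Ideal.span {℘}) := Module.finite_of_finite Fq
  letI : Fintype (Fq[X] ⧸ Ideal.span {℘}) := Fintype.ofFinite _
  have hcard : Fintype.card (Fq[X] ⧸ Ideal.span {℘}) = q ^ d := by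
    rw [Module.card_eq_pow_finrank (K := Fq), finrank_quotient_span_eq_natDegree, hdeg, hq]
  have hroot : ∀ c : B, φ c - c ∈ Ideal.span {P} → ∃ a : A, c - algebraMap A B a ∈ Ideal.span {P} := by
    intro c hc
    let g0 : Fq[X] →+* B ⧸ Ideal.span {P} :=
      (Ideal.Quotient.mk (Ideal.span {P})).comp
        ((algebraMap A B).comp (Ideal.Quotient.mk (Ideal.span {℘ ^ n})))
    have hg0 : ∀ f ∈ Ideal.span {℘}, g0 f = 0 := by
      intro f hf
      obtain ⟨e, rfl⟩ := Ideal.mem_span_singleton.mp hf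
      rw [map_mul]
      have : g0 ℘ = 0 := Ideal.Quotient.eq_zero_iff_mem.2 (Ideal.mem_span_singleton_self _)
      rw [this, zero_mul]
    let g := Ideal.Quotient.lift (Ideal.span {℘}) g0 hg0
    have hc2 : (Ideal.Quotient.mk (Ideal.span {P}) c) ^ Fintype.card (Fq[X] ⧸ Ideal.span {℘})
        = Ideal.Quotient.mk (Ideal.span {P}) c := by
      rw [hcard, ← map_pow, Ideal.Quotient.eq]
      have := Ideal.sub_mem _ hc (hφ c)
      simpa using this
    obtain ⟨a, ha⟩ := aux_root_mem g _ hc2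
    obtain ⟨f, rfl⟩ := Ideal.Quotient.mk_surjective a
    refine ⟨Ideal.Quotient.mk _ f, ?_⟩
    rw [← Ideal.Quotient.eq, ← ha]
    rfl
  refine ⟨hinj, fun b => ⟨fun hb => ?_, ?_⟩⟩
  · have hind : ∀ k ≤ n, ∃ (a : A) (c : B), b = algebraMap A B a + P ^ k * c := by
      intro k
      induction k with
      | zero => intro _; exact ⟨0, b, by simp⟩
      | succ k ih =>
        intro hk
        obtain ⟨a, c, h⟩ := ih (by omega)
        have h1 : algebraMap A B (π ^ k) * (φ c - c) = 0 := by
          have hPφ : φ P = P := φ.commutes π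
          have h2 := hb
          rw [h, map_add, map_mul, map_pow, hPφ, φ.commutes] at h2
          rw [map_pow, mul_sub, sub_eq_zero]
          exact add_left_cancel h2
        have h2 := aux_flat _ _ h1 π (key _ (hπk k (by omega)))
        obtain ⟨a', ha'⟩ := hroot c h2
        obtain ⟨e, he⟩ := Ideal.mem_span_singleton.mp ha'
        refine ⟨a + π ^ k * a', e, ?_⟩
        rw [h, sub_eq_iff_eq_add.mp he, map_add, map_mul, map_pow, pow_succ]
        ring
    obtain ⟨a, c, h⟩ := hind n le_rfl
    refine ⟨a, ?_⟩
    rw [h, hP, ← map_pow, hπn, map_zero, zero_mul, add_zero]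
  · rintro ⟨a, rfl⟩
    exact φ.commutes a
end

section
/- Let B be a commutative 𝔽_q-algebra, n ≥ 0, and I an ideal of the polynomial ring B[X] such that: (i) B[X]/I is a free B-module of rank q^n; (ii) f(0) = 0 for every f ∈ I; (iii) for every f ∈ I, the two-variable polynomial f(X+Y) ∈ B[X,Y] lies in the ideal of B[X,Y] generated by {g(X) : g ∈ I} ∪ {g(Y) : g ∈ I}; and (iv) for every λ ∈ 𝔽_q and every f ∈ I, the polynomial f(λX) lies in I. Then I is a principal ideal generated by a monic 𝔽_q-linear additive polynomial of degree q^n, i.e. there exist b_0, …, b_{n−1} ∈ B such that I = (P) with P(X) = X^{q^n} + Σ_{i=0}^{n−1} b_i X^{q^i}. -/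
open Polynomial

lemma aux_prime_pow (p : ℕ) (hp : p.Prime) (i : ℕ) (hi : 0 < i)
    (h : ∀ j, 0 < j → j < i → p ∣ i.choose j) : ∃ k, i = p ^ k := by
  induction i using Nat.strong_induction_on with
  | _ i ih =>
    have : Fact p.Prime := ⟨hp⟩
    by_cases h1 : i = 1
    · exact ⟨0, by simpa using h1⟩
    have hd : p ∣ i := by simpa using h 1 one_pos (by omega)
    obtain ⟨m, rfl⟩ := hd
    have hm : 0 < m := Nat.pos_of_mul_pos_left hi |> fun _ => by
      rcases Nat.eq_zero_or_pos m with h0 | h0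
      · simp [h0] at hi
      · exact h0
    obtain ⟨k, hk⟩ := ih m (by nlinarith [hp.two_le]) hm (by
      intro j hj hjm
      have h2 := h (p * j) (Nat.mul_pos hp.pos hj) (Nat.mul_lt_mul_of_pos_left hjm hp.pos)
      have h3 := Choose.choose_modEq_choose_mod_mul_choose_div_nat (p := p) (n := p * m) (k := p * j)
      simp only [Nat.mul_mod_right, Nat.choose_self, one_mul, Nat.mul_div_cancel_left _ hp.pos] at h3
      exact (h3.dvd_iff dvd_rfl).1 h2)
    exact ⟨k + 1, by rw [hk, pow_succ']⟩

lemma aux_q_pow {Fq : Type*} [Field Fq] [Fintype Fq] (p e k : ℕ) (hp : p.Prime) (he : 0 < e)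
    (hcard : Fintype.card Fq = p ^ e) (h : ∀ c : Fq, c ^ p ^ k = c) :
    ∃ j, p ^ k = Fintype.card Fq ^ j := by
  refine ⟨k / e, ?_⟩
  have hk := Nat.div_add_mod k e
  have h2 : ∀ c : Fq, c ^ p ^ (k % e) = c := by
    intro c
    have := h c
    rw [← hk, pow_add, pow_mul, pow_mul, ← hcard, FiniteField.pow_card_pow] at this
    exact this
  have hr : k % e = 0 := by
    by_contra hr
    have h3 : ∀ x : Fqˣ, x ^ (p ^ (k % e) - 1) = 1 := by
      intro x
      have h4 : x ^ (p ^ (k % e) - 1) * x = x := by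
        rw [← pow_succ, Nat.sub_add_cancel (Nat.one_le_pow _ _ hp.pos)]
        ext
        simpa using h2 x
      simpa using h4
    have h5 := (FiniteField.forall_pow_eq_one_iff Fq _).1 h3
    have h6 : 1 < p ^ (k % e) := Nat.one_lt_pow hr hp.one_lt
    have h7 := Nat.le_of_dvd (by omega) h5
    have h8 : p ^ (k % e) < p ^ e := Nat.pow_lt_pow_right hp.one_lt (Nat.mod_lt _ he)
    omega
  rw [hcard, ← pow_mul]
  congr 1
  omega

lemma aux_monic {B : Type*} [CommRing B] [Nontrivial B] (I : Ideal B[X])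
    (hfree : Module.Free B (B[X] ⧸ I))
    (hfin : Module.Finite B (B[X] ⧸ I)) :
    ∃ P : B[X], P.Monic ∧ P.natDegree = Module.finrank B (B[X] ⧸ I) ∧ I = Ideal.span {P} := by
  let x : B[X] ⧸ I := Ideal.Quotient.mk I X
  let L := Algebra.lmul B (B[X] ⧸ I) x
  have hmon : L.charpoly.Monic := L.charpoly_monic
  have hdeg : L.charpoly.natDegree = Module.finrank B (B[X] ⧸ I) := L.charpoly_natDegree
  have hmem : L.charpoly ∈ I := by
    have h := L.aeval_self_charpoly
    have h2 : aeval L L.charpoly = Algebra.lmul B (B[X] ⧸ I) (aeval x L.charpoly) :=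
      Polynomial.aeval_algHom_apply _ _ _
    rw [h2] at h
    have h3 := congrArg (fun f => f 1) h
    simp only [Algebra.coe_lmul_eq_mul, LinearMap.mul_apply', mul_one, LinearMap.zero_apply] at h3
    have h4 : aeval x L.charpoly = Ideal.Quotient.mk I L.charpoly := by
      have := Polynomial.aeval_algHom_apply (Ideal.Quotient.mkₐ B I) X L.charpoly
      simpa using this
    rw [h4] at h3
    exact Ideal.Quotient.eq_zero_iff_mem.1 h3
  refine ⟨L.charpoly, hmon, hdeg, ?_⟩
  generalize L.charpoly = P at *
  have hle : Ideal.span {P} ≤ I := by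
    rw [Ideal.span_le]; simpa using hmem
  apply le_antisymm _ hle
  have : Module.Free B (B[X] ⧸ Ideal.span {P}) := hmon.free_quotient
  have : Module.Finite B (B[X] ⧸ Ideal.span {P}) := hmon.finite_quotient
  have hr : Module.finrank B (B[X] ⧸ Ideal.span {P}) = Module.finrank B (B[X] ⧸ I) := by
    rw [← hdeg]; exact finrank_quotient_span_eq_natDegree' hmon
  let e := LinearEquiv.ofFinrankEq _ _ hr
  let f : (B[X] ⧸ Ideal.span {P}) →ₐ[B] (B[X] ⧸ I) := Ideal.Quotient.factorₐ B hle
  have hfs : Function.Surjective f := Ideal.Quotient.factor_surjective hle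
  have hinj : Function.Injective f.toLinearMap :=
    OrzechProperty.injective_of_surjective_of_injective e.toLinearMap f.toLinearMap
      e.injective hfs
  intro g hg
  rw [← Ideal.Quotient.eq_zero_iff_mem]
  apply hinj
  rw [map_zero]
  exact Ideal.Quotient.eq_zero_iff_mem.2 hg

lemma aux_dvd_zero {R : Type*} [CommRing R] {P D : R[X]} (hP : P.Monic) (h : P ∣ D)
    (hd : D.degree < P.degree) : D = 0 := by
  by_contra h0
  exact hP.not_dvd_of_degree_lt h0 hd h

lemma aux_add' {B Q : Type*} [CommRing B] [Nontrivial B] [CommRing Q] [Nontrivial Q]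
    (P : B[X]) (π : B[X] →+* Q) (hπ : ∀ g, π g = 0 ↔ g ∈ Ideal.span {P}) (hP : P.Monic)
    (hN : 0 < P.natDegree)
    (hadd : Polynomial.eval₂
        ((Polynomial.C : B[X] →+* Polynomial B[X]).comp (Polynomial.C : B →+* B[X]))
        (Polynomial.C (Polynomial.X : B[X]) + Polynomial.X) P ∈
      Ideal.span ((fun g : B[X] => (Polynomial.C g : Polynomial B[X])) '' ↑(Ideal.span {P}) ∪
        (fun g : B[X] => g.map (Polynomial.C : B →+* B[X])) '' ↑(Ideal.span {P})))
    (j k : ℕ) (hj : 0 < j) (hk : 0 < k) : ((k + j).choose j : B) * P.coeff (k + j) = 0 := by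
  set T := Polynomial.eval₂
        ((Polynomial.C : B[X] →+* Polynomial B[X]).comp (Polynomial.C : B →+* B[X]))
        (Polynomial.C (Polynomial.X : B[X]) + Polynomial.X) P with hT
  have hTt : T = taylor X (P.map C) := by
    rw [hT, taylor_apply, comp, eval₂_map, add_comm]
  have hTc : ∀ i, T.coeff i = hasseDeriv i P := by
    intro i
    rw [hTt, taylor_coeff]
    have : hasseDeriv i (P.map (C : B →+* B[X])) = (hasseDeriv i P).map C := by
      ext1 m
      simp [hasseDeriv_coeff]
    rw [this, eval_map, eval₂_C_X]
  let φ := Polynomial.mapRingHom π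
  let P' : Q[X] := φ (P.map C)
  have hP' : P'.Monic := (hP.map C).map _
  have hPd : P'.natDegree = P.natDegree := by
    rw [show P' = (P.map C).map _ from rfl, (hP.map C).natDegree_map, hP.natDegree_map]
  have h1 : P' ∣ φ T := by
    suffices hs : T ∈ Ideal.comap φ (Ideal.span {P'}) from
      Ideal.mem_span_singleton.1 (Ideal.mem_comap.1 hs)
    refine (Ideal.span_le.2 ?_) hadd
    rintro _ (⟨g, hg, rfl⟩ | ⟨g, hg, rfl⟩)
    · have : φ (C g) = 0 := by
        simp only [φ, coe_mapRingHom, map_C]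
        rw [(hπ g).2 hg, C_0]
      simp [this]
    · obtain ⟨s, rfl⟩ := Ideal.mem_span_singleton.1 hg
      simp only [SetLike.mem_coe, Ideal.mem_comap, Ideal.mem_span_singleton, Polynomial.map_mul,
        map_mul]
      exact dvd_mul_right _ _
  let D := T - P.map C
  have hD : φ D = 0 := by
    apply aux_dvd_zero hP'
    · rw [map_sub]
      exact dvd_sub h1 dvd_rfl
    · refine lt_of_le_of_lt (degree_map_le) ?_
      have h2 : (P.map (C : B →+* B[X])).degree = P'.degree := by
        rw [degree_eq_natDegree hP'.ne_zero, hPd, hP.degree_map, degree_eq_natDegree hP.ne_zero]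
      rw [← h2]
      rw [show D = taylor X (P.map C) - P.map C by rw [← hTt]]
      rw [← degree_taylor (P.map C) X]
      apply degree_sub_lt
      · rw [degree_taylor]
      · rw [Ne, taylor_eq_zero]; exact (hP.map C).ne_zero
      · rw [leadingCoeff_taylor]
  have hDj : hasseDeriv j P - C (P.coeff j) = 0 := by
    have h3 : (φ D).coeff j = 0 := by rw [hD]; simp
    simp only [φ, D, coe_mapRingHom, coeff_map, coeff_sub, hTc] at h3
    apply aux_dvd_zero hP (Ideal.mem_span_singleton.1 ((hπ _).1 h3))
    rw [degree_eq_natDegree hP.ne_zero]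
    refine lt_of_le_of_lt (degree_sub_le _ _) (max_lt ?_ ?_)
    · refine lt_of_le_of_lt degree_le_natDegree ?_
      have := natDegree_hasseDeriv_le P j
      exact_mod_cast (by omega : (hasseDeriv j P).natDegree < P.natDegree)
    · exact lt_of_le_of_lt degree_C_le (by exact_mod_cast hN)
  have := congrArg (fun f => coeff f k) hDj
  simpa [hasseDeriv_coeff, coeff_C, hk.ne'] using this

lemma aux_add {B : Type*} [CommRing B] [Nontrivial B] (P : B[X]) (hP : P.Monic)
    (hN : 0 < P.natDegree)
    (hadd : Polynomial.eval₂
        ((Polynomial.C : B[X] →+* Polynomial B[X]).comp (Polynomial.C : B →+* B[X]))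
        (Polynomial.C (Polynomial.X : B[X]) + Polynomial.X) P ∈
      Ideal.span ((fun g : B[X] => (Polynomial.C g : Polynomial B[X])) '' ↑(Ideal.span {P}) ∪
        (fun g : B[X] => g.map (Polynomial.C : B →+* B[X])) '' ↑(Ideal.span {P})))
    (j k : ℕ) (hj : 0 < j) (hk : 0 < k) : ((k + j).choose j : B) * P.coeff (k + j) = 0 := by
  have hne : Nontrivial (B[X] ⧸ Ideal.span {P}) := by
    rw [Ideal.Quotient.nontrivial_iff, Ne, Ideal.span_singleton_eq_top]
    intro hu
    rw [hP.eq_one_of_isUnit hu, natDegree_one] at hN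
    omega
  exact aux_add' P (Ideal.Quotient.mk (Ideal.span {P})) (fun g => Ideal.Quotient.eq_zero_iff_mem)
    hP hN hadd j k hj hk

lemma aux_smul {B : Type*} [CommRing B] [Nontrivial B] (P : B[X]) (hP : P.Monic) (c : B)
    (hc : c ^ P.natDegree = c) (h : P.comp (C c * X) ∈ Ideal.span {P}) (i : ℕ) :
    P.coeff i * (c ^ i - c) = 0 := by
  have hcoef : ∀ i, (P.comp (C c * X)).coeff i = P.coeff i * c ^ i := by
    intro i
    exact comp_C_mul_X_coeff
  have h0 : P.comp (C c * X) - C c * P = 0 := by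
    apply aux_dvd_zero hP
    · exact dvd_sub (Ideal.mem_span_singleton.1 h) (dvd_mul_left _ _)
    · rw [degree_eq_natDegree hP.ne_zero, degree_lt_iff_coeff_zero]
      intro m hm
      rw [coeff_sub, hcoef, coeff_C_mul]
      rcases Nat.lt_or_ge P.natDegree m with h1 | h1
      · simp [coeff_eq_zero_of_natDegree_lt h1]
      · obtain rfl : m = P.natDegree := le_antisymm h1 (by exact_mod_cast hm)
        rw [hc]; ring
  have := congrArg (fun f => coeff f i) h0
  simp only [coeff_sub, hcoef, coeff_C_mul, coeff_zero] at this
  rw [← this]; ring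

/-- if `I ⊆ B[X]` cuts out a finite free closed `𝔽_q`-submodule scheme of
rank `q^n` of `𝔾_a` (i.e. `B[X]/I` is free of rank `q^n`, every `f ∈ I` vanishes at `0`,
`f(X+Y)` lies in the ideal generated by `I(X) ∪ I(Y)`, and `I` is stable under
`X ↦ λX` for `λ ∈ 𝔽_q`), then `I` is generated by a monic `𝔽_q`-linear additive
polynomial `X^{q^n} + Σ_{i<n} b_i X^{q^i}`. -/
theorem submodule_scheme_additive_generator {Fq : Type*} [Field Fq] [Fintype Fq]
    (q : ℕ) (hq : q = Fintype.card Fq)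
    {B : Type*} [CommRing B] [Algebra Fq B]
    (n : ℕ) (I : Ideal B[X])
    (hfree : Module.Free B (B[X] ⧸ I))
    (hfin : Module.Finite B (B[X] ⧸ I))
    (hrank : Module.finrank B (B[X] ⧸ I) = q ^ n)
    (hzero : ∀ f ∈ I, f.coeff 0 = 0)
    (hadd : ∀ f ∈ I,
      Polynomial.eval₂
        ((Polynomial.C : B[X] →+* Polynomial B[X]).comp (Polynomial.C : B →+* B[X]))
        (Polynomial.C (Polynomial.X : B[X]) + Polynomial.X) f ∈
      Ideal.span ((fun g : B[X] => (Polynomial.C g : Polynomial B[X])) '' ↑I ∪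
        (fun g : B[X] => g.map (Polynomial.C : B →+* B[X])) '' ↑I))
    (hsmul : ∀ (c : Fq), ∀ f ∈ I,
      f.comp (Polynomial.C (algebraMap Fq B c) * Polynomial.X) ∈ I) :
    ∃ b : ℕ → B, I = Ideal.span
      {Polynomial.X ^ q ^ n
        + ∑ i ∈ Finset.range n, Polynomial.C (b i) * Polynomial.X ^ q ^ i} := by
  cases subsingleton_or_nontrivial B with
  | inl hB => exact ⟨fun _ => 0, Subsingleton.elim _ _⟩
  | inr hB =>
  obtain ⟨P, hP, hdeg, rfl⟩ := aux_monic I hfree hfin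
  rw [hrank] at hdeg
  have hPm : P ∈ Ideal.span {P} := Ideal.mem_span_singleton_self P
  obtain ⟨p, hchar, ⟨e, he⟩, hp, hcard⟩ := FiniteField.card' Fq
  simp only [PNat.mk_coe] at hcard
  have hq1 : 1 < q := hq ▸ Fintype.one_lt_card
  have hN : 0 < P.natDegree := by rw [hdeg]; exact pow_pos (by omega) _
  have key : ∀ i, P.coeff i ≠ 0 → ∃ j, i = q ^ j := by
    intro i hi
    have hi0 : 0 < i := by
      rcases Nat.eq_zero_or_pos i with h | h
      · exact absurd (h ▸ hzero P hPm) hi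
      · exact h
    have hunit : ∀ a : Fq, P.coeff i * algebraMap Fq B a = 0 → a = 0 := by
      intro a ha
      by_contra h0
      apply hi
      calc P.coeff i = P.coeff i * algebraMap Fq B a * algebraMap Fq B a⁻¹ := by
            rw [mul_assoc, ← map_mul, mul_inv_cancel₀ h0, map_one, mul_one]
        _ = 0 := by rw [ha, zero_mul]
    obtain ⟨k, rfl⟩ := aux_prime_pow p hp i hi0 (by
      intro j hj hji
      have h1 := aux_add P hP hN (hadd P hPm) j (i - j) hj (by omega)
      rw [Nat.sub_add_cancel hji.le] at h1
      rw [← CharP.cast_eq_zero_iff Fq p]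
      apply hunit
      rw [map_natCast, mul_comm]
      exact h1)
    rw [hq]
    apply aux_q_pow p e k hp he hcard
    intro c
    rw [← sub_eq_zero]
    apply hunit
    rw [map_sub, map_pow]
    apply aux_smul P hP _ _ (hsmul c P hPm)
    rw [hdeg, ← map_pow, hq, FiniteField.pow_card_pow]
  refine ⟨fun i => P.coeff (q ^ i), ?_⟩
  congr 2
  have hinj := Nat.pow_right_injective hq1
  ext i
  simp only [coeff_add, coeff_X_pow, finsetSum_coeff, coeff_C_mul, mul_ite, mul_one, mul_zero]
  by_cases hi : ∃ j, i = q ^ j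
  · obtain ⟨j, rfl⟩ := hi
    have hiff : ∀ a b, q ^ a = q ^ b ↔ a = b := fun a b => hinj.eq_iff
    simp only [hiff]
    rw [Finset.sum_ite_eq]
    rcases lt_trichotomy j n with h | h | h
    · simp [h, h.ne]
    · subst h
      simp only [if_true, Finset.mem_range, lt_irrefl, if_false, add_zero]
      rw [← hdeg]; exact hP.coeff_natDegree
    · rw [coeff_eq_zero_of_natDegree_lt (by rw [hdeg]; exact Nat.pow_lt_pow_right hq1 h)]
      simp [h.ne', h.le]
  · have h0 : P.coeff i = 0 := by
      by_contra h
      exact hi (key i h)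
    have hne : ∀ j, i ≠ q ^ j := fun j h => hi ⟨j, h⟩
    simp [h0, hne]
end

section
/- Let B be a commutative 𝔽_q-algebra, θ ∈ B, a_1 ∈ B and a_2 ∈ B^× a unit, and set F(X) = θX + a_1X^q + a_2X^{q²} ∈ B[X]. Let n ≥ 1 and let P(X) = X^{q^n} + Σ_{i=0}^{n−1} p_i X^{q^i} be a monic 𝔽_q-linear additive polynomial over B, and let G(X) = Σ_{i=0}^{s} b_i X^{q^i} with b_s ≠ 0 be an 𝔽_q-linear additive polynomial satisfying G(P(X)) = P(F(X)) in B[X]. Then s = 2, b_2 = a_2^{q^n}, and p_0·(b_0 − θ) = 0; in particular, if p_0 is a unit of B then b_0 = θ. -/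
open Polynomial

lemma addpoly_degree {B : Type*} [CommRing B] (q : ℕ) (hq : 1 < q) (c : ℕ → B) (m : ℕ)
    (h : c m ≠ 0) :
    (∑ i ∈ Finset.range (m + 1), C (c i) * X ^ q ^ i : B[X]).natDegree = q ^ m ∧
    (∑ i ∈ Finset.range (m + 1), C (c i) * X ^ q ^ i : B[X]).leadingCoeff = c m := by
  have hc : (∑ i ∈ Finset.range (m + 1), C (c i) * X ^ q ^ i : B[X]).coeff (q ^ m) = c m := by
    rw [finsetSum_coeff, Finset.sum_eq_single m]
    · simp
    · intro i _ hi
      rw [coeff_C_mul_X_pow, if_neg]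
      exact fun e => hi (Nat.pow_right_injective hq e).symm
    · simp
  have hd : (∑ i ∈ Finset.range (m + 1), C (c i) * X ^ q ^ i : B[X]).natDegree = q ^ m := by
    apply natDegree_eq_of_le_of_coeff_ne_zero _ (by rw [hc]; exact h)
    apply natDegree_sum_le_of_forall_le
    intro i hi
    refine (natDegree_C_mul_X_pow_le _ _).trans ?_
    exact Nat.pow_le_pow_right (by omega) (by have := Finset.mem_range.1 hi; omega)
  exact ⟨hd, by rw [leadingCoeff, hd, hc]⟩

lemma addpoly_eval {B : Type*} [CommRing B] (q : ℕ) (hq : 1 < q) (c : ℕ → B) (m : ℕ) :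
    (∑ i ∈ Finset.range (m + 1), C (c i) * X ^ q ^ i : B[X]).eval 0 = 0 ∧
    (derivative (∑ i ∈ Finset.range (m + 1), C (c i) * X ^ q ^ i : B[X])).eval 0 = c 0 := by
  constructor
  · rw [eval_finsetSum]
    apply Finset.sum_eq_zero
    intro i _
    have : q ^ i ≠ 0 := pow_ne_zero _ (by omega)
    rw [eval_mul, eval_pow, eval_X, zero_pow this, mul_zero]
  · rw [derivative_sum, eval_finsetSum, Finset.sum_eq_single 0]
    · simp
    · intro i _ hi
      have : q ^ i - 1 ≠ 0 := by
        have := Nat.one_lt_pow hi hq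
        omega
      rw [derivative_C_mul, derivative_X_pow, eval_mul, eval_mul, eval_pow, eval_X,
        zero_pow this, mul_zero, mul_zero]
    · simp

/-- let `F(X) = θX + a₁X^q + a₂X^{q²}` with `a₂` a unit, let
`P(X) = X^{q^n} + Σ_{i<n} p_i X^{q^i}` be monic additive, and let
`G(X) = Σ_{i=0}^{s} b_i X^{q^i}` with `b_s ≠ 0` satisfy `G(P(X)) = P(F(X))`.
Then `s = 2`, `b₂ = a₂^{q^n}` and `p₀(b₀ − θ) = 0`; in particular if `p₀` is a unit
then `b₀ = θ`. -/
theorem quotient_drinfeld_t_action {Fq : Type*} [Field Fq] [Fintype Fq]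
    (q : ℕ) (hq : q = Fintype.card Fq)
    {B : Type*} [CommRing B] [Algebra Fq B]
    (θ a₁ : B) (a₂ : Bˣ) (n : ℕ) (hn : 1 ≤ n)
    (pc : ℕ → B) (s : ℕ) (b : ℕ → B) (hbs : b s ≠ 0)
    (hcomp :
      (∑ i ∈ Finset.range (s + 1), Polynomial.C (b i) * Polynomial.X ^ q ^ i).comp
          (Polynomial.X ^ q ^ n
            + ∑ i ∈ Finset.range n, Polynomial.C (pc i) * Polynomial.X ^ q ^ i)
        = (Polynomial.X ^ q ^ n
            + ∑ i ∈ Finset.range n, Polynomial.C (pc i) * Polynomial.X ^ q ^ i).comp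
          (Polynomial.C θ * Polynomial.X + Polynomial.C a₁ * Polynomial.X ^ q
            + Polynomial.C (a₂ : B) * Polynomial.X ^ q ^ 2)) :
    s = 2 ∧ b 2 = (a₂ : B) ^ q ^ n ∧ pc 0 * (b 0 - θ) = 0 ∧
      (IsUnit (pc 0) → b 0 = θ) := by
  have hq1 : 1 < q := hq ▸ Fintype.one_lt_card
  have hB : Nontrivial B := ⟨⟨_, _, hbs⟩⟩
  have hP : (X ^ q ^ n + ∑ i ∈ Finset.range n, C (pc i) * X ^ q ^ i : B[X])
      = ∑ i ∈ Finset.range (n + 1), C ((fun j => if j = n then 1 else pc j) i) * X ^ q ^ i := by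
    rw [Finset.sum_range_succ, add_comm]
    congr 1
    · apply Finset.sum_congr rfl
      intro i hi
      have : i ≠ n := (Finset.mem_range.1 hi).ne
      simp [this]
    · simp
  have hF : (C θ * X + C a₁ * X ^ q + C (a₂ : B) * X ^ q ^ 2 : B[X])
      = ∑ i ∈ Finset.range (2 + 1),
        C ((fun j => if j = 0 then θ else if j = 1 then a₁ else (a₂ : B)) i) * X ^ q ^ i := by
    simp [Finset.sum_range_succ]
  rw [hP, hF] at hcomp
  obtain ⟨dG, lG⟩ := addpoly_degree q hq1 b s hbs
  obtain ⟨dP, lP⟩ := addpoly_degree q hq1 (fun j => if j = n then 1 else pc j) n (by simp)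
  obtain ⟨dF, lF⟩ := addpoly_degree q hq1
    (fun j => if j = 0 then θ else if j = 1 then a₁ else (a₂ : B)) 2 (by simp)
  obtain ⟨_, eG⟩ := addpoly_eval q hq1 b s
  obtain ⟨zP, eP⟩ := addpoly_eval q hq1 (fun j => if j = n then 1 else pc j) n
  obtain ⟨zF, eF⟩ := addpoly_eval q hq1
    (fun j => if j = 0 then θ else if j = 1 then a₁ else (a₂ : B)) 2
  generalize (∑ i ∈ Finset.range (s + 1), C (b i) * X ^ q ^ i : B[X]) = G at *
  generalize (∑ i ∈ Finset.range (n + 1),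
    C ((fun j => if j = n then 1 else pc j) i) * X ^ q ^ i : B[X]) = P at *
  generalize (∑ i ∈ Finset.range (2 + 1),
    C ((fun j => if j = 0 then θ else if j = 1 then a₁ else (a₂ : B)) i) * X ^ q ^ i : B[X])
    = F at *
  have hn0 : (0 : ℕ) ≠ n := by omega
  simp only [if_true, if_neg hn0, OfNat.ofNat_ne_zero, OfNat.ofNat_ne_one, if_false]
    at lP lF eP eF
  have d1 : (G.comp P).natDegree = q ^ s * q ^ n := by
    rw [natDegree_comp_eq_of_mul_ne_zero, dG, dP]
    rw [lG, lP]
    simpa using hbs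
  have d2 : (P.comp F).natDegree = q ^ n * q ^ 2 := by
    rw [natDegree_comp_eq_of_mul_ne_zero, dP, dF]
    rw [lP, lF, one_mul]
    exact (a₂.isUnit.pow _).ne_zero
  have hs : s = 2 := by
    rw [hcomp, d2, ← pow_add, ← pow_add] at d1
    have := Nat.pow_right_injective hq1 d1
    omega
  subst hs
  have hder : pc 0 * (b 0 - θ) = 0 := by
    have h := congrArg (fun R => (derivative R).eval 0) hcomp
    simp only [derivative_comp, eval_mul, eval_comp, zP, zF, eG, eP, eF] at h
    linear_combination h
  refine ⟨rfl, ?_, hder, fun hu => ?_⟩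
  · have h1 := coeff_comp_degree_mul_degree (p := G) (q := P) (by rw [dP]; positivity)
    have h2 := coeff_comp_degree_mul_degree (p := P) (q := F) (by rw [dF]; positivity)
    rw [dG, dP, lG, lP, one_pow, mul_one, hcomp] at h1
    rw [dP, dF, lP, lF, one_mul, mul_comm] at h2
    exact h1.symm.trans h2
  · exact sub_eq_zero.1 (hu.mul_right_eq_zero.1 hder)
end

section
/- Let d ≥ 1, let k be a field containing the finite field 𝔽_{q^d}, and let θ ∈ k be a generator of 𝔽_{q^d} over 𝔽_q (so θ^{q^d} = θ but θ^{q^r} ≠ θ for 1 ≤ r ≤ d−1). Let a_1 ∈ k, a_2 ∈ k∖{0}, c ∈ k∖{0}, and set F(X) = θX + a_1X^q + a_2X^{q²}. Then there is no polynomial f(X) = Σ_{i=1}^{s} b_i X^{q^i} ∈ k[X] (an 𝔽_q-linear additive polynomial with vanishing coefficient of X) such that f(F(X)) − θ·f(X) = c·X^{q^{d+1}} in k[X]. -/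
open Polynomial

theorem aux_coeff {Fq : Type*} [Field Fq] [Fintype Fq]
    (q : ℕ) (hq : q = Fintype.card Fq)
    {k : Type*} [Field k] [Algebra Fq k]
    (d : ℕ) (θ a₁ a₂ c : k) (s : ℕ) (b : ℕ → k)
    (h : (∑ i ∈ Finset.Icc 1 s, Polynomial.C (b i) * Polynomial.X ^ q ^ i).comp
          (Polynomial.C θ * Polynomial.X + Polynomial.C a₁ * Polynomial.X ^ q
            + Polynomial.C a₂ * Polynomial.X ^ q ^ 2)
        - Polynomial.C θ * (∑ i ∈ Finset.Icc 1 s, Polynomial.C (b i) * Polynomial.X ^ q ^ i)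
      = Polynomial.C c * Polynomial.X ^ q ^ (d + 1)) (n : ℕ) :
    ∑ i ∈ Finset.Icc 1 s, b i * ((if n = i then θ ^ q ^ i - θ else 0)
      + (if n = i + 1 then a₁ ^ q ^ i else 0) + (if n = i + 2 then a₂ ^ q ^ i else 0))
      = if n = d + 1 then c else 0 := by
  have hq1 : 1 < q := hq ▸ Fintype.one_lt_card
  obtain ⟨p, hp⟩ := CharP.exists Fq
  obtain ⟨m, hpp, hm⟩ := FiniteField.card Fq p
  have : Fact p.Prime := ⟨hpp⟩
  have : CharP k p := charP_of_injective_algebraMap (algebraMap Fq k).injective p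
  have hadd : ∀ (x y : k[X]) (i : ℕ), (x + y) ^ q ^ i = x ^ q ^ i + y ^ q ^ i := by
    intro x y i
    rw [hq, hm, ← pow_mul]
    exact add_pow_char_pow x y p _
  have hinj : ∀ i j : ℕ, q ^ i = q ^ j ↔ i = j := fun i j =>
    (Nat.pow_right_injective hq1).eq_iff
  have h2 : ∑ i ∈ Finset.Icc 1 s, (C (b i * (θ ^ q ^ i - θ)) * X ^ q ^ i
      + C (b i * a₁ ^ q ^ i) * X ^ q ^ (i + 1) + C (b i * a₂ ^ q ^ i) * X ^ q ^ (i + 2))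
      = C c * X ^ q ^ (d + 1) := by
    rw [← h, Polynomial.sum_comp, Finset.mul_sum, ← Finset.sum_sub_distrib]
    refine Finset.sum_congr rfl fun i _ => ?_
    simp only [mul_comp, C_comp, pow_comp, X_comp, hadd, mul_pow, ← pow_mul, C_mul, C_sub, C_pow]
    ring
  have h3 := congrArg (fun P : k[X] => P.coeff (q ^ n)) h2
  simp only [finsetSum_coeff, coeff_add, coeff_C_mul_X_pow, hinj] at h3
  rw [← h3]
  refine Finset.sum_congr rfl fun i _ => ?_
  simp only [mul_add, mul_ite, mul_zero]

/-- let `k ⊇ 𝔽_{q^d}` be a field, `θ ∈ k` a generator of `𝔽_{q^d}` over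
`𝔽_q` (so `θ^{q^d} = θ` and `θ^{q^r} ≠ θ` for `1 ≤ r ≤ d−1`), `a₁ ∈ k`, `a₂, c ∈ k∖{0}`,
and `F(X) = θX + a₁X^q + a₂X^{q²}`. Then no `𝔽_q`-linear additive polynomial
`f(X) = Σ_{i=1}^{s} b_i X^{q^i}` with vanishing linear coefficient satisfies
`f(F(X)) − θ·f(X) = c·X^{q^{d+1}}`. -/
theorem not_strictly_inner {Fq : Type*} [Field Fq] [Fintype Fq]
    (q : ℕ) (hq : q = Fintype.card Fq)
    {k : Type*} [Field k] [Algebra Fq k]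
    (d : ℕ) (hd : 1 ≤ d)
    (θ : k) (hθ1 : θ ^ q ^ d = θ) (hθ2 : ∀ r, 1 ≤ r → r ≤ d - 1 → θ ^ q ^ r ≠ θ)
    (a₁ a₂ : k) (ha₂ : a₂ ≠ 0) (c : k) (hc : c ≠ 0) :
    ∀ (s : ℕ) (b : ℕ → k),
      (∑ i ∈ Finset.Icc 1 s, Polynomial.C (b i) * Polynomial.X ^ q ^ i).comp
          (Polynomial.C θ * Polynomial.X + Polynomial.C a₁ * Polynomial.X ^ q
            + Polynomial.C a₂ * Polynomial.X ^ q ^ 2)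
        - Polynomial.C θ * (∑ i ∈ Finset.Icc 1 s, Polynomial.C (b i) * Polynomial.X ^ q ^ i)
      ≠ Polynomial.C c * Polynomial.X ^ q ^ (d + 1) := by
  intro s b h
  have H := aux_coeff q hq d θ a₁ a₂ c s b h
  have low : ∀ n, n ∈ Finset.Icc 1 s → n ≤ d - 1 → b n = 0 := by
    intro n
    induction n using Nat.strong_induction_on with
    | _ n ih =>
      intro hn hnd
      have h1 := H n
      rw [Finset.sum_eq_single_of_mem n hn, if_neg (by omega : ¬ n = d + 1)] at h1
      · have := hθ2 n (Finset.mem_Icc.1 hn).1 hnd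
        simpa [sub_eq_zero, this] using h1
      · intro i hi hin
        rcases lt_or_gt_of_ne hin with hlt | hgt
        · rw [ih i hlt hi (by omega), zero_mul]
        · rw [if_neg (by omega), if_neg (by omega), if_neg (by omega)]
          simp
  have high : ∀ j n, n ∈ Finset.Icc 1 s → s - n = j → b n = 0 := by
    intro j
    induction j using Nat.strong_induction_on with
    | _ j ih =>
      intro n hn hj
      by_cases hnd : n ≤ d - 1
      · exact low n hn hnd
      have h1 := H (n + 2)
      rw [Finset.sum_eq_single_of_mem n hn, if_neg (by omega : ¬ n + 2 = d + 1)] at h1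
      · simpa [ha₂] using h1
      · intro i hi hin
        rw [Finset.mem_Icc] at hn
        have hi' := Finset.mem_Icc.1 hi
        rcases lt_or_gt_of_ne hin with hlt | hgt
        · rw [if_neg (by omega), if_neg (by omega), if_neg (by omega)]
          simp
        · rw [ih (s - i) (by omega) i hi rfl, zero_mul]
  have h1 := H (d + 1)
  rw [Finset.sum_eq_zero, if_pos rfl] at h1
  · exact hc h1.symm
  · intro i hi
    rw [high _ i hi rfl, zero_mul]
end

section
/- Let K₀ be a field equipped with an 𝔽_q[t]-algebra structure, and let 𝔪 ∈ 𝔽_q[t] be monic of degree m ≥ 1. Then the polynomial Φ^C_𝔪(X) − x^{−1} is irreducible in K₀((x))[X], where K₀((x)) is the field of formal Laurent series over K₀ in the variable x. (Equivalently, the monic polynomial X^{q^m} − x·Σ_{i=0}^{m} c_i X^{q^m − q^i}, obtained from Φ^C_𝔪(1/X) − 1/x by substituting X ↦ 1/X and clearing denominators, is Eisenstein at (x) in K₀[[x]][X], hence irreducible over K₀((x)).) -/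
open Polynomial

theorem carlitz_aux {Fq : Type*} [Field Fq] (q : ℕ) (hq : 1 < q)
    (Φ : Fq[X] → Polynomial (Fq[X])) (hΦ : IsCarlitzHom q Φ) (n : ℕ) :
    ∀ a : Fq[X], a.Monic → a.natDegree = n →
      (Φ a).Monic ∧ (Φ a).natDegree = q ^ n ∧ (Φ a).coeff 0 = 0 := by
  obtain ⟨hadd, hC, hmul, h1, hX⟩ := hΦ
  have hlt : (Polynomial.C Polynomial.X * Polynomial.X : Polynomial (Fq[X])).degree
      < (Polynomial.X ^ q : Polynomial (Fq[X])).degree := by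
    rw [degree_C_mul_X X_ne_zero, degree_X_pow]
    exact_mod_cast hq
  have hXm : (Φ X).Monic := by
    rw [hX]
    exact (monic_X_pow q).add_of_right hlt
  have hXd : (Φ X).natDegree = q := by
    rw [hX, natDegree_add_eq_right_of_degree_lt hlt, natDegree_X_pow]
  have hX0 : (Φ X).coeff 0 = 0 := by
    rw [hX]
    simp [coeff_X_pow]
    omega
  induction n with
  | zero =>
    intro a ha hd
    rw [eq_one_of_monic_natDegree_zero ha hd, h1]
    simp [monic_X]
  | succ n ih =>
    intro a ha hd
    have hbd : a.divX.natDegree = n := by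
      rw [natDegree_divX_eq_natDegree_tsub_one, hd]; rfl
    have hbm : a.divX.Monic := by
      rw [Monic, leadingCoeff, hbd, coeff_divX, ← hd]
      exact ha
    obtain ⟨i1, i2, i3⟩ := ih _ hbm hbd
    have key : Φ a = (Φ a.divX).comp (Φ X) + Polynomial.C (Polynomial.C (a.coeff 0)) * X := by
      conv_lhs => rw [← divX_mul_X_add a, hadd, hmul, ← mul_one (Polynomial.C (a.coeff 0)), hC, h1]
    have hcm : ((Φ a.divX).comp (Φ X)).Monic := i1.comp hXm (by omega)
    have hcd : ((Φ a.divX).comp (Φ X)).natDegree = q ^ (n + 1) := by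
      rw [natDegree_comp, i2, hXd, pow_succ]
    have hl : (Polynomial.C (Polynomial.C (a.coeff 0)) * X : Polynomial (Fq[X])).degree
        < ((Φ a.divX).comp (Φ X)).degree := by
      refine (degree_C_mul_X_le _).trans_lt ?_
      rw [degree_eq_natDegree hcm.ne_zero, hcd]
      exact_mod_cast Nat.one_lt_pow (by omega) hq
    refine ⟨?_, ?_, ?_⟩
    · rw [key]; exact hcm.add_of_left hl
    · rw [key, natDegree_add_eq_left_of_degree_lt hl, hcd]
    · rw [key, coeff_add, coeff_zero_eq_eval_zero, eval_comp, ← coeff_zero_eq_eval_zero, hX0,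
        ← coeff_zero_eq_eval_zero, i3]
      simp

theorem irreducible_of_reverse_aux {K : Type*} [Field K] (f : K[X]) (h0 : f.coeff 0 ≠ 0)
    (h : Irreducible f.reverse) : Irreducible f := by
  have key : ∀ a : K[X], a.coeff 0 ≠ 0 → IsUnit a.reverse → IsUnit a := by
    intro a ha hu
    have h1 := natDegree_eq_zero_of_isUnit hu
    rw [reverse_natDegree, natTrailingDegree_eq_zero.2 (Or.inr ha), Nat.sub_zero] at h1
    rw [eq_C_of_natDegree_eq_zero h1]
    exact isUnit_C.2 (isUnit_iff_ne_zero.2 ha)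
  refine ⟨fun hu => h.not_isUnit ?_, ?_⟩
  · rw [eq_C_of_natDegree_eq_zero (natDegree_eq_zero_of_isUnit hu), reverse_C]
    exact isUnit_C.2 (isUnit_iff_ne_zero.2 h0)
  · rintro a b rfl
    rw [mul_coeff_zero] at h0
    rw [reverse_mul_of_domain] at h
    exact (h.isUnit_or_isUnit rfl).imp (key a (left_ne_zero_of_mul h0))
      (key b (right_ne_zero_of_mul h0))

theorem eisenstein_aux {K : Type*} [Field K] (A : K[X]) (hA : A.Monic) (hd : 0 < A.natDegree)
    (h0 : A.coeff 0 = 0) :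
    Irreducible (A.map (HahnSeries.C : K →+* LaurentSeries K)
        - Polynomial.C (HahnSeries.single (-1 : ℤ) (1 : K))) := by
  set P : Polynomial (PowerSeries K) :=
    Polynomial.C PowerSeries.X * A.map (PowerSeries.C) - Polynomial.C 1 with hP
  have hXne : (PowerSeries.X : PowerSeries K) ≠ 0 := PowerSeries.X_ne_zero
  have hPd : P.natDegree = A.natDegree := by
    rw [hP, natDegree_sub_C, natDegree_C_mul hXne, hA.natDegree_map]
  have hPc : ∀ n, n ≠ 0 → P.coeff n = PowerSeries.X * PowerSeries.C (A.coeff n) := by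
    intro n hn
    rw [hP, coeff_sub, coeff_C_mul, coeff_map, coeff_C_ne_zero hn, sub_zero]
  have hP0 : P.coeff 0 = -1 := by
    rw [hP, coeff_sub, coeff_C_mul, coeff_map, h0, coeff_C_zero]; simp
  have hPl : P.leadingCoeff = PowerSeries.X := by
    rw [leadingCoeff, hPd, hPc _ hd.ne', hA.coeff_natDegree]; simp
  have htr : P.natTrailingDegree = 0 := 
    natTrailingDegree_eq_zero.2 (Or.inr (by rw [hP0]; simp))
  have hrd : P.reverse.natDegree = A.natDegree := by
    rw [reverse_natDegree, htr, hPd, Nat.sub_zero]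
  have hrl : P.reverse.leadingCoeff = -1 := by
    rw [reverse_leadingCoeff, trailingCoeff, htr, hP0]
  have hprim : P.reverse.IsPrimitive := by
    intro r hr
    rw [C_dvd_iff_dvd_coeff] at hr
    have := hr P.reverse.natDegree
    rw [coeff_natDegree, hrl] at this
    exact isUnit_of_dvd_unit this isUnit_one.neg
  have hprime : (Ideal.span {(PowerSeries.X : PowerSeries K)}).IsPrime :=
    PowerSeries.span_X_isPrime
  have heis : P.reverse.IsEisensteinAt (Ideal.span {(PowerSeries.X : PowerSeries K)}) := by
    refine ⟨?_, ?_, ?_⟩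
    · rw [hrl]
      intro h
      exact hprime.ne_top (Ideal.eq_top_of_isUnit_mem _ h isUnit_one.neg)
    · intro n hn
      rw [hrd] at hn
      rw [coeff_reverse, hPd, revAt_le hn.le, hPc _ (by omega)]
      exact Ideal.mul_mem_right _ _ (Ideal.mem_span_singleton_self _)
    · rw [coeff_zero_reverse, hPl, Ideal.span_singleton_pow, Ideal.mem_span_singleton]
      intro h
      rw [PowerSeries.X_pow_dvd_iff] at h
      simpa using h 1 (by norm_num)
  have hirr := heis.irreducible hprime hprim (by rw [hrd]; exact hd)
  rw [hprim.irreducible_iff_irreducible_map_fraction_map (K := LaurentSeries K)] at hirr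
  have hinj : Function.Injective (algebraMap (PowerSeries K) (LaurentSeries K)) :=
    IsFractionRing.injective _ _
  have hrev : P.reverse.map (algebraMap (PowerSeries K) (LaurentSeries K))
      = (P.map (algebraMap (PowerSeries K) (LaurentSeries K))).reverse := by
    ext1 n
    rw [coeff_map, coeff_reverse, coeff_reverse, coeff_map, natDegree_map_eq_of_injective hinj]
  rw [hrev] at hirr
  have hirr2 := irreducible_of_reverse_aux _ (by rw [coeff_map, hP0]; simp) hirr
  have hx : (HahnSeries.single (1 : ℤ) (1 : K)) * HahnSeries.single (-1 : ℤ) (1 : K) = 1 := by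
    simp
  have hmap : P.map (algebraMap (PowerSeries K) (LaurentSeries K))
      = Polynomial.C (HahnSeries.single (1 : ℤ) (1 : K)) *
        (A.map (HahnSeries.C : K →+* LaurentSeries K)
        - Polynomial.C (HahnSeries.single (-1 : ℤ) (1 : K))) := by
    ext1 n
    rw [mul_sub, ← C_mul, hx, hP]
    simp only [coeff_map, coeff_sub, coeff_C_mul, map_sub, map_mul, LaurentSeries.coe_algebraMap,
      HahnSeries.ofPowerSeries_X, HahnSeries.ofPowerSeries_C, coeff_C]
    split_ifs <;> simp
  rw [hmap] at hirr2
  exact (irreducible_isUnit_mul (isUnit_C.2 (IsUnit.of_mul_eq_one _ hx))).1 hirr2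

/-- for a field `K₀` which is an `𝔽_q[t]`-algebra and `𝔪` monic of degree
`m ≥ 1`, the polynomial `Φ^C_𝔪(X) − x^{−1}` is irreducible over the Laurent series
field `K₀((x))` (here `x^{-1}` is the Laurent series `single (−1) 1`). -/
theorem carlitz_sub_inv_x_irreducible {Fq : Type*} [Field Fq] [Fintype Fq]
    (q : ℕ) (hq : q = Fintype.card Fq)
    (Φ : Fq[X] → Polynomial (Fq[X])) (hΦ : IsCarlitzHom q Φ)
    {K₀ : Type*} [Field K₀] [Algebra Fq[X] K₀]
    (𝔪 : Fq[X]) (hmon : 𝔪.Monic) (m : ℕ) (hm : 1 ≤ m) (hdeg : 𝔪.natDegree = m) :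
    Irreducible
      ((Φ 𝔪).map ((HahnSeries.C : K₀ →+* LaurentSeries K₀).comp (algebraMap Fq[X] K₀))
        - Polynomial.C (HahnSeries.single (-1 : ℤ) (1 : K₀))) := by
  have hq1 : 1 < q := hq ▸ Fintype.one_lt_card
  obtain ⟨h1, h2, h3⟩ := carlitz_aux q hq1 Φ hΦ m 𝔪 hmon hdeg
  rw [← Polynomial.map_map]
  refine eisenstein_aux _ (h1.map _) ?_ ?_
  · rw [h1.natDegree_map, h2]
    exact pow_pos (by omega) _
  · rw [coeff_map, h3, map_zero]
end

section
/- Let k be a field, F = k((u)) the Laurent series field with u-adic order v (v(u) = 1), and let d ≥ 1 and q ≥ 2 be a prime power. Let V(X) = Σ_{i=0}^{d} a_i X^{q^i} ∈ F[X] with v(a_0) = 1, v(a_i) ≥ 1 for 1 ≤ i ≤ d−1, and v(a_d) = 0. Let L be a field extension of F equipped with a valuation w (with values in a linearly ordered commutative group with zero) such that 0 < w(u) < 1 and w(a) = w(u)^{v(a)} for every nonzero a ∈ F. Then: (a) every root z ∈ L∖{0} of V satisfies w(z)^{q^d − 1} = w(u); and (b) defining the twisted iterates V^{[1]} = V and V^{[n]}(X)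 = V(σ(V^{[n−1]})(X)), where σ raises each coefficient to the q^d-th power, if L contains a splitting field of V^{[n]} then there exists a root z' ∈ L∖{0} of V^{[n]} with w(z')^{(q^d − 1)·q^{d(n−1)}} = w(u). -/
open Polynomial

/-- Coefficientwise `Q`-th power twist of a polynomial (`σ` raising each coefficient to
the `Q`-th power). -/
noncomputable def frobTwist {F : Type*} [CommRing F] (Q : ℕ) (P : F[X]) : F[X] :=
  ∑ i ∈ Finset.range (P.natDegree + 1), Polynomial.C (P.coeff i ^ Q) * Polynomial.X ^ i

/-- Twisted iterates `V^{[n]}`: `V^{[0]} = X` and `V^{[n+1]} = V(σ(V^{[n]})(X))`, so that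
`V^{[1]} = V`. -/
noncomputable def iterTwist {F : Type*} [CommRing F] (Q : ℕ) (V : F[X]) : ℕ → F[X]
  | 0 => Polynomial.X
  | n + 1 => V.comp (frobTwist Q (iterTwist Q V n))

section helpers
variable {F : Type*} [Field F] {G : Type*} [LinearOrderedCommGroupWithZero G]

def NPSm (v : Valuation F G) (s : G) (R : F[X]) : Prop := ∀ j, v (R.coeff j) ≤ s

theorem NPSm.mul {v : Valuation F G} {s s' : G} {A B : F[X]} (hA : NPSm v s A)
    (hB : NPSm v s' B) : NPSm v (s * s') (A * B) := by
  intro j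
  rw [Polynomial.coeff_mul]
  refine v.map_sum_le fun x _ => ?_
  rw [map_mul]
  exact mul_le_mul' (hA _) (hB _)

theorem NPSm.add {v : Valuation F G} {s : G} {A B : F[X]} (hA : NPSm v s A)
    (hB : NPSm v s B) : NPSm v s (A + B) := by
  intro j
  rw [Polynomial.coeff_add]
  exact v.map_add_le (hA _) (hB _)

theorem NPSm.sum {v : Valuation F G} {s : G} (S : Finset ℕ) (f : ℕ → F[X])
    (h : ∀ i ∈ S, NPSm v s (f i)) : NPSm v s (∑ i ∈ S, f i) := by
  intro j
  rw [Polynomial.finsetSum_coeff]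
  exact v.map_sum_le fun i hi => h i hi j

theorem NPSm.mono {v : Valuation F G} {s s' : G} {A : F[X]} (hA : NPSm v s A)
    (h : s ≤ s') : NPSm v s' A := fun j => (hA j).trans h

theorem NPSm.monomial {v : Valuation F G} {s : G} {b : F} (n : ℕ) (hb : v b ≤ s) :
    NPSm v s (C b * X ^ n) := by
  intro j
  rw [Polynomial.coeff_C_mul_X_pow]
  split_ifs
  · exact hb
  · simp

theorem NPSm.cmul {v : Valuation F G} {s : G} {b : F} {A : F[X]} (hb : v b ≤ s)
    (hA : NPSm v 1 A) : NPSm v s (C b * A) := by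
  intro j
  rw [Polynomial.coeff_C_mul, map_mul]
  simpa using mul_le_mul' hb (hA j)

def NPG (v : Valuation F G) (s : G) (N : ℕ) (P : F[X]) : Prop :=
  ∃ b R, v b = 1 ∧ P = C b * X ^ N + R ∧ NPSm v s R

theorem NPG.int {v : Valuation F G} {s : G} (hs : s ≤ 1) {N : ℕ} {P : F[X]}
    (h : NPG v s N P) : NPSm v 1 P := by
  obtain ⟨b, R, hb, rfl, hR⟩ := h
  exact (NPSm.monomial N hb.le).add (hR.mono hs)

theorem NPG.mul {v : Valuation F G} {s : G} (hs : s ≤ 1) {N M : ℕ} {P Q : F[X]}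
    (h : NPG v s N P) (h' : NPG v s M Q) : NPG v s (N + M) (P * Q) := by
  have hQ := h'.int hs
  obtain ⟨b, R, hb, rfl, hR⟩ := h
  obtain ⟨c, T, hc, rfl, hT⟩ := h'
  refine ⟨b * c, C b * X ^ N * T + R * (C c * X ^ M + T), by simp [hb, hc], ?_, ?_⟩
  · rw [C_mul]; ring
  · refine NPSm.add ?_ ?_
    · simpa using (NPSm.monomial N hb.le).mul hT
    · simpa using hR.mul hQ

theorem NPG.pow {v : Valuation F G} {s : G} (hs : s ≤ 1) {N : ℕ} {P : F[X]}
    (h : NPG v s N P) (m : ℕ) : NPG v s (N * m) (P ^ m) := by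
  induction m with
  | zero => exact ⟨1, 0, by simp, by simp, fun j => by simp⟩
  | succ m ih => rw [pow_succ, Nat.mul_succ]; exact ih.mul hs h

/-- the inductive package -/
structure NPGood (v : Valuation F G) (t : G) (N : ℕ) (P : F[X]) : Prop where
  deg : P.natDegree = N
  zero : P.coeff 0 = 0
  lead : v (P.coeff N) = 1
  small : ∀ j, j ≠ N → v (P.coeff j) ≤ t

theorem NPGood.toG {v : Valuation F G} {t : G} {N : ℕ} {P : F[X]}
    (h : NPGood v t N P) : NPG v t N P := by
  refine ⟨P.coeff N, P - C (P.coeff N) * X ^ N, h.lead, by ring, fun j => ?_⟩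
  rw [coeff_sub, coeff_C_mul_X_pow]
  split_ifs with hj
  · subst hj; simp
  · simpa using h.small j hj

theorem coeff_frobTwist (Q : ℕ) (hQ : Q ≠ 0) (P : F[X]) (j : ℕ) :
    (frobTwist Q P).coeff j = P.coeff j ^ Q := by
  unfold frobTwist
  rw [finsetSum_coeff]
  simp only [coeff_C_mul_X_pow]
  rw [Finset.sum_ite_eq]
  split_ifs with h
  · rfl
  · rw [coeff_eq_zero_of_natDegree_lt (by simpa using h), zero_pow hQ]

theorem NPGood.twist {v : Valuation F G} {t : G} (ht : t ≤ 1) {N : ℕ} {P : F[X]}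
    (h : NPGood v t N P) {Q : ℕ} (hQ : Q ≠ 0) : NPGood v t N (frobTwist Q P) := by
  have hl : P.coeff N ≠ 0 := by
    intro h0
    have := h.lead
    simp [h0] at this
  refine ⟨?_, ?_, ?_, ?_⟩
  · apply natDegree_eq_of_le_of_coeff_ne_zero
    · rw [natDegree_le_iff_coeff_eq_zero]
      intro j hj
      rw [coeff_frobTwist Q hQ, coeff_eq_zero_of_natDegree_lt (by rw [h.deg]; exact hj),
        zero_pow hQ]
    · rw [coeff_frobTwist Q hQ]; exact pow_ne_zero _ hl
  · rw [coeff_frobTwist Q hQ, h.zero, zero_pow hQ]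
  · rw [coeff_frobTwist Q hQ, map_pow, h.lead, one_pow]
  · intro j hj
    rw [coeff_frobTwist Q hQ, map_pow]
    exact (pow_le_of_le_one zero_le ((h.small j hj).trans ht) hQ).trans (h.small j hj)

theorem natDegree_V (q d : ℕ) (hq : 2 ≤ q) (a : ℕ → F) (had : a d ≠ 0) :
    (∑ i ∈ Finset.range (d + 1), C (a i) * X ^ q ^ i).natDegree = q ^ d := by
  apply natDegree_eq_of_le_of_coeff_ne_zero
  · refine natDegree_sum_le_of_forall_le _ _ fun i hi => ?_
    refine (natDegree_C_mul_X_pow_le _ _).trans ?_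
    exact Nat.pow_le_pow_right (by omega) (by simpa [Nat.lt_succ_iff] using hi)
  · rw [finsetSum_coeff, Finset.sum_eq_single d]
    · simpa using had
    · intro i _ hi
      rw [coeff_C_mul_X_pow, if_neg]
      exact fun h => hi (Nat.pow_right_injective hq h.symm)
    · simp

theorem NPGood.compV {v : Valuation F G} {t : G} (ht : t < 1) {N : ℕ} {P : F[X]}
    (h : NPGood v t N P) (hN : N ≠ 0) (q d : ℕ) (hq : 2 ≤ q) (a : ℕ → F)
    (had : v (a d) = 1) (ha : ∀ i < d, v (a i) ≤ t) :
    NPGood v t (N * q ^ d)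
      ((∑ i ∈ Finset.range (d + 1), C (a i) * X ^ q ^ i).comp P) := by
  have had0 : a d ≠ 0 := by
    intro h0
    simp [h0] at had
  have key : NPG v t (N * q ^ d)
      ((∑ i ∈ Finset.range (d + 1), C (a i) * X ^ q ^ i).comp P) := by
    obtain ⟨b, R, hb, hP, hR⟩ := h.toG.pow ht.le (q ^ d)
    refine ⟨a d * b, C (a d) * R + ∑ i ∈ Finset.range d, C (a i) * P ^ q ^ i,
      by simp [had, hb], ?_, ?_⟩
    · simp only [comp, eval₂_finsetSum, eval₂_mul, eval₂_C, eval₂_pow, eval₂_X]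
      rw [Finset.sum_range_succ, C_mul]
      rw [hP]; ring
    · refine NPSm.add ?_ (NPSm.sum _ _ fun i hi => ?_)
      · have := (NPSm.monomial (v := v) 0 had.le).mul hR
        simpa using this
      · exact NPSm.cmul (ha i (by simpa using hi)) ((h.toG.pow ht.le _).int ht.le)
  have hdeg : ((∑ i ∈ Finset.range (d + 1), C (a i) * X ^ q ^ i).comp P).natDegree
      = N * q ^ d := by
    rw [natDegree_comp, natDegree_V q d hq a had0, h.deg, mul_comm]
  obtain ⟨b, R, hb, hP, hR⟩ := key
  refine ⟨hdeg, ?_, ?_, ?_⟩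
  · have h0 : P.eval 0 = 0 := by rw [← coeff_zero_eq_eval_zero, h.zero]
    rw [coeff_zero_eq_eval_zero, eval_comp, h0, eval_finsetSum]
    refine Finset.sum_eq_zero fun i _ => ?_
    have : q ^ i ≠ 0 := pow_ne_zero _ (by omega)
    rw [eval_mul, eval_pow, eval_X, zero_pow this, mul_zero]
  · rw [hP, coeff_add, coeff_C_mul_X_pow, if_pos rfl, Valuation.map_add_eq_of_lt_left, hb]
    rw [hb]; exact (hR _).trans_lt ht
  · intro j hj
    rw [hP, coeff_add, coeff_C_mul_X_pow, if_neg hj, zero_add]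
    exact hR _

theorem NPGood.iter {v : Valuation F G} {t : G} (ht : t < 1) (q d : ℕ) (hq : 2 ≤ q) (a : ℕ → F)
    (had : v (a d) = 1) (ha : ∀ i < d, v (a i) ≤ t) (n : ℕ) :
    NPGood v t ((q ^ d) ^ n)
      (iterTwist (q ^ d) (∑ i ∈ Finset.range (d + 1), C (a i) * X ^ q ^ i) n) := by
  have hQ : q ^ d ≠ 0 := pow_ne_zero _ (by omega)
  induction n with
  | zero =>
    refine ⟨by simp [iterTwist], by simp [iterTwist], by simp [iterTwist], fun j hj => ?_⟩
    simp only [pow_zero] at hj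
    simp [iterTwist, coeff_X, hj.symm]
  | succ n ih =>
    rw [iterTwist, pow_succ]
    exact (ih.twist ht.le hQ).compV ht (pow_ne_zero _ hQ) q d hq a had ha

theorem NP_val_root (v : Valuation F G) {t : G} (ht0 : t ≠ 0) (ht : t < 1) {N : ℕ} {P : F[X]}
    (h : NPGood v t N P) (hN : N ≠ 0) {z y : F} (hz : P.eval z = y) (hy : t ≤ v y)
    (hy1 : v y < 1) : v z ^ N = v y := by
  have hP : P.eval z = P.coeff N * z ^ N + ∑ j ∈ Finset.range N, P.coeff j * z ^ j := by
    rw [eval_eq_sum_range, h.deg, Finset.sum_range_succ, add_comm]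
  have hl : v (P.coeff N * z ^ N) = v z ^ N := by simp [h.lead]
  rcases lt_or_ge (v z) 1 with h1 | h1
  · have hs : v (∑ j ∈ Finset.range N, P.coeff j * z ^ j) < v y := by
      refine Valuation.map_sum_lt _ (lt_of_lt_of_le (zero_lt_iff.2 ht0) hy).ne' fun j hj => ?_
      rcases Nat.eq_zero_or_pos j with rfl | hj0
      · simpa [h.zero] using lt_of_lt_of_le (zero_lt_iff.2 ht0) hy
      · refine lt_of_lt_of_le ?_ hy
        rw [map_mul, map_pow]
        calc _ ≤ t * v z ^ j := mul_le_mul_left (h.small j (by simp at hj; omega)) _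
          _ < t * 1 := by
            refine mul_lt_mul_of_pos_left (pow_lt_one₀ zero_le h1 (by omega)) (zero_lt_iff.2 ht0)
          _ = t := mul_one t
    have e : P.coeff N * z ^ N = y - ∑ j ∈ Finset.range N, P.coeff j * z ^ j := by
      rw [← hz, hP]; ring
    rw [← hl, e]
    exact Valuation.map_sub_eq_of_lt_left _ hs
  · exfalso
    have hp : 0 < v z ^ N := pow_pos (lt_of_lt_of_le zero_lt_one h1) _
    have hs : v (∑ j ∈ Finset.range N, P.coeff j * z ^ j) < v (P.coeff N * z ^ N) := by
      rw [hl]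
      refine Valuation.map_sum_lt _ hp.ne' fun j hj => ?_
      simp only [Finset.mem_range] at hj
      rw [map_mul, map_pow]
      calc _ ≤ t * v z ^ N := mul_le_mul' (h.small j (by omega)) (pow_le_pow_right₀ h1 hj.le)
        _ < 1 * v z ^ N := mul_lt_mul_of_pos_right ht hp
        _ = _ := one_mul _
    have e := Valuation.map_add_eq_of_lt_left v hs
    rw [← hP, hz, hl] at e
    rw [e] at hy1
    exact absurd hy1 (not_lt.2 (one_le_pow₀ h1))

theorem NP_part_a (v : Valuation F G) {t : G} (ht0 : t ≠ 0) (ht : t < 1) (q d : ℕ) (hq : 2 ≤ q)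
    (hd : 1 ≤ d) (a : ℕ → F) (ha0 : v (a 0) = t)
    (had : v (a d) = 1) (ha : ∀ i < d, v (a i) ≤ t) {z : F} (hz : z ≠ 0)
    (h : ∑ i ∈ Finset.range (d + 1), a i * z ^ q ^ i = 0) : v z ^ (q ^ d - 1) = t := by
  have hz0 : v z ≠ 0 := (Valuation.ne_zero_iff v).2 hz
  have hzp := zero_lt_iff.2 hz0
  have hQ : q ^ d - 1 + 1 = q ^ d := Nat.sub_add_cancel (Nat.one_le_pow _ _ (by omega))
  rw [Finset.sum_range_succ] at h
  have hl : v (a d * z ^ q ^ d) = v z ^ q ^ d := by simp [had]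
  rcases lt_or_ge (v z) 1 with h1 | h1
  · obtain ⟨e, rfl⟩ : ∃ e, d = e + 1 := ⟨d - 1, by omega⟩
    rw [Finset.sum_range_succ'] at h
    have h00 : v (a 0 * z ^ q ^ 0) = t * v z := by simp [ha0]
    have hs : v (∑ i ∈ Finset.range e, a (i + 1) * z ^ q ^ (i + 1)) < v (a 0 * z ^ q ^ 0) := by
      rw [h00]
      refine Valuation.map_sum_lt _ (mul_ne_zero ht0 hz0) fun j hj => ?_
      simp only [Finset.mem_range] at hj
      rw [map_mul, map_pow]
      calc _ ≤ t * v z ^ q ^ (j + 1) := mul_le_mul_left (ha (j + 1) (by omega)) _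
        _ < t * v z := by
          refine mul_lt_mul_of_pos_left ?_ (zero_lt_iff.2 ht0)
          exact pow_lt_self_of_lt_one₀ hzp h1 (Nat.one_lt_pow (by omega) (by omega))
    have e1 := Valuation.map_add_eq_of_lt_right v hs
    rw [eq_neg_of_add_eq_zero_left h, Valuation.map_neg, hl, h00, ← hQ, pow_succ] at e1
    exact mul_right_cancel₀ hz0 e1
  · exfalso
    have hp : 0 < v z ^ q ^ d := pow_pos hzp _
    have hs : v (∑ j ∈ Finset.range d, a j * z ^ q ^ j) < v (a d * z ^ q ^ d) := by
      rw [hl]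
      refine Valuation.map_sum_lt _ hp.ne' fun j hj => ?_
      simp only [Finset.mem_range] at hj
      rw [map_mul, map_pow]
      calc _ ≤ t * v z ^ q ^ d := mul_le_mul' (ha j hj)
            (pow_le_pow_right₀ h1 (Nat.pow_le_pow_right (by omega) hj.le))
        _ < 1 * v z ^ q ^ d := mul_lt_mul_of_pos_right ht hp
        _ = _ := one_mul _
    rw [eq_neg_of_add_eq_zero_left h, Valuation.map_neg] at hs
    exact lt_irrefl _ hs

theorem NPGood.mapL {K : Type*} [Field K] (f : K →+* F) {v : Valuation F G} {t : G} {N : ℕ}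
    {P : K[X]} (h : NPGood (v.comap f) t N P) : NPGood v t N (P.map f) := by
  refine ⟨by rw [natDegree_map, h.deg], by simp [h.zero], ?_, fun j hj => ?_⟩
  · simpa using h.lead
  · simpa using h.small j hj

theorem NP_exists (q d : ℕ) (hq : 2 ≤ q) (hd : 1 ≤ d) (a : ℕ → F) (ha0 : a 0 ≠ 0)
    (had : a d ≠ 0) {P : F[X]} (hP : P.natDegree ≠ 0)
    (hs : Splits ((∑ i ∈ Finset.range (d + 1), C (a i) * X ^ q ^ i).comp P)) :
    ∃ z, P.eval z ≠ 0 ∧ ∑ i ∈ Finset.range (d + 1), a i * (P.eval z) ^ q ^ i = 0 := by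
  set V : F[X] := ∑ i ∈ Finset.range (d + 1), C (a i) * X ^ q ^ i with hV
  set W : F[X] := ∑ i ∈ Finset.range (d + 1), C (a i) * X ^ (q ^ i - 1) with hW
  have hVW : V = W * X := by
    rw [hV, hW, Finset.sum_mul]
    refine Finset.sum_congr rfl fun i _ => ?_
    rw [mul_assoc, ← pow_succ, Nat.sub_add_cancel (Nat.one_le_pow _ _ (by omega))]
  have hVd : V.natDegree = q ^ d := natDegree_V q d hq a had
  have hQ : 1 < q ^ d := Nat.one_lt_pow (by omega) (by omega)
  have hV0 : V ≠ 0 := by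
    intro h; rw [h] at hVd; simp at hVd; omega
  have hW0 : W ≠ 0 := by
    intro h; rw [h, zero_mul] at hVW; exact hV0 hVW
  have hWd : W.natDegree ≠ 0 := by
    rw [hVW, natDegree_mul_X hW0] at hVd; omega
  have hc0 : V.comp P ≠ 0 := by
    intro h
    have h2 : (V.comp P).natDegree = q ^ d * P.natDegree := by rw [natDegree_comp, hVd]
    rw [h, natDegree_zero] at h2
    exact (mul_ne_zero (by omega) hP) h2.symm
  have hWs : (W.comp P).Splits := by
    refine hs.of_dvd hc0 ?_
    rw [hVW, mul_comp]
    exact dvd_mul_right _ _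
  obtain ⟨z, hz⟩ := hWs.exists_eval_eq_zero (by
    intro h
    have := natDegree_eq_of_degree_eq_some h
    rw [natDegree_comp] at this
    exact mul_ne_zero hWd hP this)
  rw [eval_comp] at hz
  refine ⟨z, fun h0 => ?_, ?_⟩
  · rw [h0, hW, eval_finsetSum, Finset.sum_eq_single 0] at hz
    · simp [ha0] at hz
    · intro i _ hi
      have : 1 < q ^ i := Nat.one_lt_pow hi (by omega)
      have : q ^ i - 1 ≠ 0 := by omega
      simp [this]
    · simp
  · have : V.eval (P.eval z) = 0 := by rw [hVW, eval_mul, hz, zero_mul]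
    simpa [hV, eval_finsetSum] using this

end helpers

/-- Newton-polygon valuations of roots of the Verschiebung polynomial
`V(X) = Σ_{i=0}^{d} a_i X^{q^i}` over `F = k((u))` with `v(a₀) = 1`, `v(a_i) ≥ 1`
(`1 ≤ i ≤ d−1`), `v(a_d) = 0`: (a) every nonzero root `z` of `V` in a valued extension
`(L, w)` compatible with the `u`-adic order satisfies `w(z)^{q^d−1} = w(u)`; (b) if `L`
splits the `n`-th twisted iterate `V^{[n]}`, then some nonzero root `z'` of `V^{[n]}`
satisfies `w(z')^{(q^d−1)q^{d(n−1)}} = w(u)`. -/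
theorem verschiebung_newton_polygon {k : Type*} [Field k]
    (q d : ℕ) (hq : IsPrimePow q) (hd : 1 ≤ d)
    (a : ℕ → LaurentSeries k)
    (ha0 : a 0 ≠ 0) (ha0ord : (a 0).order = 1)
    (hamid : ∀ i, 1 ≤ i → i ≤ d - 1 → a i = 0 ∨ 1 ≤ (a i).order)
    (had : a d ≠ 0) (hadord : (a d).order = 0)
    {L : Type*} [Field L] [Algebra (LaurentSeries k) L]
    {Γ₀ : Type*} [LinearOrderedCommGroupWithZero Γ₀] (w : Valuation L Γ₀)
    (hwu0 : 0 < w (algebraMap (LaurentSeries k) L (HahnSeries.single (1 : ℤ) (1 : k))))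
    (hwu1 : w (algebraMap (LaurentSeries k) L (HahnSeries.single (1 : ℤ) (1 : k))) < 1)
    (hwcompat : ∀ f : LaurentSeries k, f ≠ 0 →
      w (algebraMap (LaurentSeries k) L f)
        = w (algebraMap (LaurentSeries k) L (HahnSeries.single (1 : ℤ) (1 : k))) ^ f.order) :
    (∀ z : L, z ≠ 0 →
      Polynomial.aeval z (∑ i ∈ Finset.range (d + 1),
        Polynomial.C (a i) * Polynomial.X ^ q ^ i) = 0 →
      w z ^ (q ^ d - 1)
        = w (algebraMap (LaurentSeries k) L (HahnSeries.single (1 : ℤ) (1 : k)))) ∧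
    (∀ n : ℕ, 1 ≤ n →
      Polynomial.Splits (Polynomial.map (algebraMap (LaurentSeries k) L)
        (iterTwist (q ^ d) (∑ i ∈ Finset.range (d + 1),
          Polynomial.C (a i) * Polynomial.X ^ q ^ i) n)) →
      ∃ z' : L, z' ≠ 0 ∧
        Polynomial.aeval z' (iterTwist (q ^ d) (∑ i ∈ Finset.range (d + 1),
          Polynomial.C (a i) * Polynomial.X ^ q ^ i) n) = 0 ∧
        w z' ^ ((q ^ d - 1) * q ^ (d * (n - 1)))
          = w (algebraMap (LaurentSeries k) L (HahnSeries.single (1 : ℤ) (1 : k)))) := by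
  have hq2 : 2 ≤ q := hq.two_le
  set φ := algebraMap (LaurentSeries k) L with hφ
  set t := w (φ (HahnSeries.single (1 : ℤ) (1 : k))) with ht
  have ht0 : t ≠ 0 := hwu0.ne'
  have h0 : w (φ (a 0)) = t := by rw [hwcompat _ ha0, ha0ord, zpow_one]
  have h1 : w (φ (a d)) = 1 := by rw [hwcompat _ had, hadord, zpow_zero]
  have h2 : ∀ i < d, w (φ (a i)) ≤ t := by
    intro i hi
    rcases Nat.eq_zero_or_pos i with rfl | hi0
    · exact h0.le
    · by_cases hz : a i = 0
      · simp [hz]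
      · have ho := (hamid i hi0 (by omega)).resolve_left hz
        rw [hwcompat _ hz]
        calc t ^ (a i).order ≤ t ^ (1 : ℤ) := zpow_le_zpow_right_of_le_one₀ hwu0 hwu1.le ho
          _ = t := zpow_one t
  refine ⟨fun z hz hr => ?_, fun n hn hs => ?_⟩
  · refine NP_part_a w ht0 hwu1 q d hq2 hd (fun i => φ (a i)) h0 h1 h2 hz ?_
    simpa [aeval_def, eval₂_finsetSum] using hr
  · obtain ⟨m, rfl⟩ : ∃ m, n = m + 1 := ⟨n - 1, by omega⟩
    have hQ : q ^ d ≠ 0 := pow_ne_zero _ (by omega)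
    have hN : (q ^ d) ^ m ≠ 0 := pow_ne_zero _ hQ
    have hg := ((NPGood.iter (v := w.comap φ) hwu1 q d hq2 a h1 h2 m).twist hwu1.le hQ).mapL φ
    set P := frobTwist (q ^ d) (iterTwist (q ^ d) (∑ i ∈ Finset.range (d + 1),
          Polynomial.C (a i) * Polynomial.X ^ q ^ i) m) with hP
    have hmap : (∑ i ∈ Finset.range (d + 1),
          Polynomial.C (a i) * Polynomial.X ^ q ^ i).map φ = ∑ i ∈ Finset.range (d + 1),
          Polynomial.C (φ (a i)) * Polynomial.X ^ q ^ i := by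
      simp [Polynomial.map_sum]
    rw [iterTwist, Polynomial.map_comp, hmap] at hs
    obtain ⟨z, hz, hr⟩ := NP_exists q d hq2 hd (fun i => φ (a i)) (by simpa using ha0)
      (by simpa using had) (by rw [hg.deg]; exact hN) hs
    have hy := NP_part_a w ht0 hwu1 q d hq2 hd (fun i => φ (a i)) h0 h1 h2 hz hr
    have hQ1 : 1 < q ^ d := Nat.one_lt_pow (by omega) (by omega)
    have hQ2 : q ^ d - 1 ≠ 0 := by omega
    have hy1 : w ((P.map φ).eval z) < 1 := by
      by_contra hc
      exact absurd (hy ▸ one_le_pow₀ (not_lt.1 hc)) (not_le.2 hwu1)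
    have hyt : t ≤ w ((P.map φ).eval z) := by
      conv_lhs => rw [← hy]
      exact pow_le_of_le_one zero_le hy1.le hQ2
    have hv := NP_val_root w ht0 hwu1 hg hN rfl hyt hy1
    refine ⟨z, ?_, ?_, ?_⟩
    · rintro rfl
      apply hz
      rw [← coeff_zero_eq_eval_zero, hg.zero]
    · rw [iterTwist, ← hP, ← eval_map_algebraMap, ← hφ, Polynomial.map_comp, hmap, eval_comp]
      simpa [eval_finsetSum] using hr
    · rw [Nat.add_sub_cancel, mul_comm, pow_mul, pow_mul q d m, hv, hy]
end

section
/- Let R be a commutative 𝔽_q[t]-algebra and let f ∈ 𝔽_q[t] be monic of degree e ≥ 1, with image f̄ ∈ R. In the Laurent series ring R((w)), the element Φ^C_f(w^{−1}) (whose lowest-order term is w^{−q^e} with coefficient 1) is invertible; let x ∈ R((w)) denote its inverse. Then in the module of Kähler differentials Ω¹_{R((w))/R} one has the identity w²·dx = f̄·x²·dw. -/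
open Polynomial

/-- The Laurent series `Φ^C_f(w^{−1}) = Σ_j c_j w^{−j} ∈ R((w))` attached to the Carlitz
polynomial `Φ^C_f(Z) = Σ_j c_j Z^j` (supported on `q`-power exponents `j ≤ q^e`). -/
noncomputable def carlitzAtInvW {Fq : Type*} [Field Fq] (R : Type*) [CommRing R]
    [Algebra (Polynomial Fq) R] (Φ : Fq[X] → Polynomial (Fq[X])) (f : Fq[X]) (N : ℕ) :
    LaurentSeries R :=
  ∑ j ∈ Finset.range (N + 1),
    HahnSeries.single (-(j : ℤ)) (algebraMap Fq[X] R ((Φ f).coeff j))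

lemma carlitz_derivative {Fq : Type*} [Field Fq] [Fintype Fq]
    (q : ℕ) (hq : q = Fintype.card Fq)
    (Φ : Fq[X] → Polynomial (Fq[X])) (hΦ : IsCarlitzHom q Φ) (a : Fq[X]) :
    derivative (Φ a) = C a := by
  obtain ⟨hadd, hsm, hmul, h1, hX⟩ := hΦ
  have hq0 : (q : Fq[X][X]) = 0 := by
    have : (q : Fq) = 0 := by rw [hq]; exact FiniteField.cast_card_eq_zero Fq
    rw [← map_natCast (C : Fq[X] →+* _), ← map_natCast (C : Fq →+* _), this]; simp
  induction a using Polynomial.induction_on with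
  | C c =>
    have := hsm c 1
    rw [mul_one] at this
    rw [this, h1]; simp
  | add p r hp hr => rw [hadd]; simp [hp, hr]
  | monomial n c ih =>
    have : (C c * X ^ (n+1) : Fq[X]) = X * (C c * X ^ n) := by ring
    rw [this, hmul, derivative_comp, ih, hX]
    simp [derivative_X_pow, hq0]
    ring

lemma carlitz_monic {Fq : Type*} [Field Fq] [Fintype Fq]
    (q : ℕ) (hq : q = Fintype.card Fq)
    (Φ : Fq[X] → Polynomial (Fq[X])) (hΦ : IsCarlitzHom q Φ) (n : ℕ) :
    ∀ f : Fq[X], f.Monic → f.natDegree = n → (Φ f).Monic ∧ (Φ f).natDegree = q ^ n := by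
  obtain ⟨hadd, hsm, hmul, h1, hX⟩ := hΦ
  have hq1 : 1 < q := hq ▸ Fintype.one_lt_card
  have hlin (c : Fq[X]) : (C c * X : Fq[X][X]).degree ≤ 1 := degree_C_mul_X_le c
  have hXm : (Φ X).Monic ∧ (Φ X).natDegree = q := by
    have hlt : (C X * X : Fq[X][X]).degree < (X ^ q : Fq[X][X]).degree := by
      rw [degree_X_pow]
      exact (hlin _).trans_lt (by exact_mod_cast hq1)
    rw [hX]
    exact ⟨(monic_X_pow q).add_of_right hlt, by
      rw [natDegree_eq_of_degree_eq (degree_add_eq_right_of_degree_lt hlt), natDegree_X_pow]⟩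
  induction n with
  | zero =>
    intro f hf hd
    rw [hf.natDegree_eq_zero.mp hd, h1]
    simp [monic_X]
  | succ n ih =>
    intro f hf hd
    have hgd : f.divX.natDegree = n := by rw [natDegree_divX_eq_natDegree_tsub_one, hd]; simp
    have hgm : f.divX.Monic := by
      rw [Monic, leadingCoeff, hgd, coeff_divX, ← hd]; exact hf
    obtain ⟨hm, hdg⟩ := ih _ hgm hgd
    have hcm : ((Φ X).comp (Φ f.divX)).Monic :=
      hXm.1.comp hm (by rw [hdg]; positivity)
    have hcd : ((Φ X).comp (Φ f.divX)).natDegree = q ^ (n+1) := by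
      rw [natDegree_comp, hXm.2, hdg]; ring
    have hfe : Φ f = (Φ X).comp (Φ f.divX) + C (C (f.coeff 0)) * X := by
      conv_lhs => rw [← X_mul_divX_add f]
      rw [hadd, hmul]
      congr 1
      rw [← h1, ← hsm, mul_one]
    have hlt : (C (C (f.coeff 0)) * X : Fq[X][X]).degree
        < ((Φ X).comp (Φ f.divX)).degree := by
      rw [degree_eq_natDegree hcm.ne_zero, hcd]
      exact (hlin _).trans_lt (by exact_mod_cast Nat.one_lt_pow (by omega) hq1)
    rw [hfe]
    exact ⟨hcm.add_of_left hlt, by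
      rw [natDegree_eq_of_degree_eq (degree_add_eq_left_of_degree_lt hlt), hcd]⟩

lemma laurent_algebraMap {R : Type*} [CommRing R] (r : R) :
    algebraMap R (LaurentSeries R) r = HahnSeries.single (0 : ℤ) r := by
  first
    | rfl
    | (rw [HahnSeries.algebraMap_apply]; rfl)
    | (rw [HahnSeries.algebraMap_apply']; simp)

lemma isUnit_eval₂_inv {A R : Type*} [CommRing A] [CommRing R] (φ : A →+* R)
    (P : A[X]) (hP : P.Monic) (u : LaurentSeries R)
    (hu : u * HahnSeries.single (1 : ℤ) (1 : R) = 1) :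
    IsUnit (P.eval₂ ((algebraMap R (LaurentSeries R)).comp φ) u) := by
  have hu' : HahnSeries.single (1 : ℤ) (1 : R) * u = 1 := by rw [mul_comm]; exact hu
  let _ : Invertible u := ⟨HahnSeries.single (1 : ℤ) (1 : R), hu', hu⟩
  have key := eval₂_reverse_mul_pow ((algebraMap R (LaurentSeries R)).comp φ) u P
  rw [← key]
  refine IsUnit.mul ?_ ((isUnit_of_invertible u).pow _)
  have : eval₂ ((algebraMap R (LaurentSeries R)).comp φ) (⅟u) P.reverse
      = HahnSeries.ofPowerSeries ℤ R ((P.reverse.map φ : R[X]) : PowerSeries R) := by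
    have hc : ((algebraMap R (LaurentSeries R)).comp φ) =
      ((HahnSeries.ofPowerSeries ℤ R).comp (Polynomial.coeToPowerSeries.ringHom)).comp
        ((C : R →+* R[X]).comp φ) := by
      ext1 r
      simp [laurent_algebraMap]
    have hx : (⅟u : LaurentSeries R) =
      ((HahnSeries.ofPowerSeries ℤ R).comp (Polynomial.coeToPowerSeries.ringHom)) X := by
      change HahnSeries.single (1 : ℤ) (1 : R) = _
      simp
    rw [hc, hx, ← hom_eval₂, ← eval₂_map]
    simp
  rw [this]
  apply IsUnit.map
  rw [PowerSeries.isUnit_iff_constantCoeff]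
  rw [← PowerSeries.coeff_zero_eq_constantCoeff_apply, Polynomial.coeff_coe, coeff_map,
    coeff_zero_reverse, hP.leadingCoeff, map_one]
  exact isUnit_one

theorem cusp_kaehler_differential_identity {Fq : Type*} [Field Fq] [Fintype Fq]
    (q : ℕ) (hq : q = Fintype.card Fq)
    (Φ : Fq[X] → Polynomial (Fq[X])) (hΦ : IsCarlitzHom q Φ)
    {R : Type*} [CommRing R] [Algebra Fq[X] R]
    (f : Fq[X]) (hmon : f.Monic) (e : ℕ) (he : 1 ≤ e) (hdeg : f.natDegree = e) :
    IsUnit (carlitzAtInvW R Φ f (q ^ e)) ∧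
    ∀ x : LaurentSeries R, carlitzAtInvW R Φ f (q ^ e) * x = 1 →
      (HahnSeries.single (1 : ℤ) (1 : R)) ^ 2 • KaehlerDifferential.D R (LaurentSeries R) x
        = (algebraMap R (LaurentSeries R) (algebraMap Fq[X] R f) * x ^ 2) •
            KaehlerDifferential.D R (LaurentSeries R) (HahnSeries.single (1 : ℤ) (1 : R)) := by
  obtain ⟨hm, hd⟩ := carlitz_monic q hq Φ hΦ e f hmon hdeg
  have hder := carlitz_derivative q hq Φ hΦ f
  set u : LaurentSeries R := HahnSeries.single (-1 : ℤ) (1 : R) with hu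
  have huw : u * HahnSeries.single (1 : ℤ) (1 : R) = 1 := by
    rw [hu, HahnSeries.single_mul_single]; simp
  have hy : carlitzAtInvW R Φ f (q ^ e) =
      (Φ f).eval₂ ((algebraMap R (LaurentSeries R)).comp (algebraMap Fq[X] R)) u := by
    rw [eval₂_eq_sum_range, hd, carlitzAtInvW]
    refine Finset.sum_congr rfl fun j _ => ?_
    rw [hu, HahnSeries.single_pow]
    simp [laurent_algebraMap, HahnSeries.single_mul_single]
  refine ⟨hy ▸ isUnit_eval₂_inv _ _ hm u huw, fun x hx => ?_⟩
  set y := carlitzAtInvW R Φ f (q ^ e)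
  set w : LaurentSeries R := HahnSeries.single (1 : ℤ) (1 : R)
  set D := KaehlerDifferential.D R (LaurentSeries R)
  set F := algebraMap R (LaurentSeries R) (algebraMap Fq[X] R f) with hF
  have hDy : D y = F • D u := by
    have : y = aeval u ((Φ f).map (algebraMap Fq[X] R)) := by
      rw [hy, aeval_def, eval₂_map]
    rw [this, Derivation.map_aeval, derivative_map, hder]
    simp [hF]
  have h1 : y • D x + x • D y = 0 := by
    rw [← Derivation.leibniz, hx, Derivation.map_one_eq_zero]
  have h2 : u • D w + w • D u = 0 := by
    rw [← Derivation.leibniz, huw, Derivation.map_one_eq_zero]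
  have e1 : D x = -((x ^ 2 * F) • D u) := by
    have : x • (y • D x + x • D y) = 0 := by rw [h1, smul_zero]
    rw [hDy, smul_add, smul_smul, mul_comm x y, hx, one_smul, smul_smul, smul_smul] at this
    rw [eq_neg_iff_add_eq_zero, ← this]; congr 2; ring
  have e2 : D w = -((w ^ 2) • D u) := by
    have : w • (u • D w + w • D u) = 0 := by rw [h2, smul_zero]
    rw [smul_add, smul_smul, mul_comm w u, huw, one_smul, smul_smul] at this
    rw [eq_neg_iff_add_eq_zero, ← this]; congr 2; ring
  rw [e1, e2, smul_neg, smul_neg, smul_smul, smul_smul]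
  congr 2; ring
end

section
/- Let q be a prime power and 𝔫 ∈ 𝔽_q[t] a nonconstant polynomial that has a monic irreducible factor whose degree is coprime to q − 1. Then the image of 𝔽_q^× in the unit group (𝔽_q[t]/(𝔫))^× admits a complement: there exists a subgroup Δ ≤ (𝔽_q[t]/(𝔫))^× such that Δ ∩ 𝔽_q^× = {1} and Δ·𝔽_q^× = (𝔽_q[t]/(𝔫))^×; equivalently, the natural map Δ → (𝔽_q[t]/(𝔫))^×/𝔽_q^× is an isomorphism. -/
open Polynomial

/-- if the nonconstant polynomial `𝔫 ∈ 𝔽_q[t]` has a monic irreducible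
factor whose degree is coprime to `q − 1`, then the image of `𝔽_q^×` in
`(𝔽_q[t]/(𝔫))^×` admits a complement `Δ`. -/
theorem constants_complement_exists {Fq : Type*} [Field Fq] [Fintype Fq]
    (q : ℕ) (hq : q = Fintype.card Fq)
    (𝔫 : Fq[X]) (hn : 1 ≤ 𝔫.natDegree)
    (hfac : ∃ 𝔮 : Fq[X], 𝔮.Monic ∧ Irreducible 𝔮 ∧ 𝔮 ∣ 𝔫 ∧
      Nat.Coprime 𝔮.natDegree (q - 1)) :
    ∃ Δ : Subgroup (Fq[X] ⧸ Ideal.span {𝔫})ˣ,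
      Δ ⊓ MonoidHom.range
          (Units.map (algebraMap Fq (Fq[X] ⧸ Ideal.span {𝔫})).toMonoidHom) = ⊥ ∧
      Δ ⊔ MonoidHom.range
          (Units.map (algebraMap Fq (Fq[X] ⧸ Ideal.span {𝔫})).toMonoidHom) = ⊤ := by
  obtain ⟨Q, hQm, -, hdvd, hcop⟩ := hfac
  let f : (Fq[X] ⧸ Ideal.span {𝔫}) →+* AdjoinRoot Q :=
    Ideal.Quotient.lift (Ideal.span {𝔫}) (AdjoinRoot.mk Q) (by
      intro a ha
      rw [Ideal.mem_span_singleton] at ha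
      exact AdjoinRoot.mk_eq_zero.mpr (hdvd.trans ha))
  have hf : ∀ c : Fq, f (algebraMap Fq (Fq[X] ⧸ Ideal.span {𝔫}) c)
      = algebraMap Fq (AdjoinRoot Q) c := fun c => rfl
  let ι : Fqˣ →* (Fq[X] ⧸ Ideal.span {𝔫})ˣ :=
    Units.map (algebraMap Fq (Fq[X] ⧸ Ideal.span {𝔫})).toMonoidHom
  let χ : (Fq[X] ⧸ Ideal.span {𝔫})ˣ →* Fqˣ :=
    (Units.map (Algebra.norm Fq : AdjoinRoot Q →* Fq)).comp (Units.map f.toMonoidHom)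
  have hfin : Module.finrank Fq (AdjoinRoot Q) = Q.natDegree := by
    rw [(AdjoinRoot.powerBasis' hQm).finrank, AdjoinRoot.powerBasis'_dim]
  have hχ : ∀ c : Fqˣ, χ (ι c) = c ^ Q.natDegree := by
    intro c
    ext
    change Algebra.norm Fq (f (algebraMap Fq _ (c : Fq))) = _
    rw [hf, Algebra.norm_algebraMap, hfin, Units.val_pow_eq_pow_val]
  have hc : (Nat.card Fqˣ).Coprime Q.natDegree := by
    rw [Nat.card_units, Nat.card_eq_fintype_card, ← hq]
    exact hcop.symm
  refine ⟨χ.ker, ?_, ?_⟩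
  · rw [eq_bot_iff]
    rintro _ ⟨hu, c, rfl⟩
    have h1 : c ^ Q.natDegree = 1 := (hχ c).symm.trans hu
    have h2 : c = 1 := (powCoprime hc).injective (by simpa using h1)
    rw [h2, map_one]
    exact Subgroup.mem_bot.mpr rfl
  · rw [eq_top_iff]
    intro u _
    obtain ⟨c, hcu⟩ := (powCoprime hc).surjective (χ u)
    have hcu' : χ (ι c) = χ u := (hχ c).trans hcu
    have : u = (u * (ι c)⁻¹) * ι c := by simp
    rw [this]
    refine Subgroup.mul_mem_sup ?_ ⟨c, rfl⟩
    rw [MonoidHom.mem_ker, map_mul, map_inv, hcu', mul_inv_cancel]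
end
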